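/- Let t be an integer greater than two, and let G be a finite simple graph that is gap-free and claw-free with I_t(G) ≠ 0. Then the t-path ideal I_t(G) has a linear minimal free resolution, i.e., reg(I_t(G)) = t. -/

import Mathlib

open MvPolynomial

/-! Graph-theoretic definitions -/

/-- A list of vertices is a path in `G`: consecutive vertices are adjacent and all
vertices are distinct. -/
def SimpleGraph.IsPathList {V : Type*} (G : SimpleGraph V) (l : List V) : Prop :=
  l.Chain' G.Adj ∧ l.Nodup

/-- The `t`-path ideal of a graph: the ideal generated by the monomials
`x_{v_1} ⋯ x_{v_t}` where `v_1 ⋯ v_t` is a path on `t` distinct vertices of `G`. -/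
noncomputable def pathIdeal {V K : Type*} [CommRing K] (G : SimpleGraph V) (t : ℕ) :
    Ideal (MvPolynomial V K) :=
  Ideal.span { p | ∃ l : List V, G.IsPathList l ∧ l.length = t ∧ p = (l.map X).prod }

/-- The edge ideal of a graph. -/
noncomputable def edgeIdeal {V K : Type*} [CommRing K] (G : SimpleGraph V) :
    Ideal (MvPolynomial V K) :=
  Ideal.span { p | ∃ u v, G.Adj u v ∧ p = X u * X v }

/-- `G` is gap-free: any two vertex-disjoint edges are joined by an edge. -/
def SimpleGraph.GapFree {V : Type*} (G : SimpleGraph V) : Prop :=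
  ∀ a b c d : V, G.Adj a b → G.Adj c d → a ≠ c → a ≠ d → b ≠ c → b ≠ d →
    (G.Adj a c ∨ G.Adj a d ∨ G.Adj b c ∨ G.Adj b d)

/-- `G` is claw-free: it has no induced `K_{1,3}`. -/
def SimpleGraph.ClawFree {V : Type*} (G : SimpleGraph V) : Prop :=
  ∀ v a b c : V, G.Adj v a → G.Adj v b → G.Adj v c → a ≠ b → a ≠ c → b ≠ c →
    (G.Adj a b ∨ G.Adj a c ∨ G.Adj b c)

/-- `G` is cricket-free: it has no induced cricket. -/
def SimpleGraph.CricketFree {V : Type*} (G : SimpleGraph V) : Prop :=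
  ¬ ∃ w1 w2 w3 w4 w5 : V,
      w1 ≠ w2 ∧ w1 ≠ w3 ∧ w1 ≠ w4 ∧ w1 ≠ w5 ∧ w2 ≠ w3 ∧ w2 ≠ w4 ∧ w2 ≠ w5 ∧
      w3 ≠ w4 ∧ w3 ≠ w5 ∧ w4 ≠ w5 ∧
      G.Adj w1 w3 ∧ G.Adj w2 w3 ∧ G.Adj w3 w4 ∧ G.Adj w3 w5 ∧ G.Adj w4 w5 ∧
      ¬ G.Adj w1 w2 ∧ ¬ G.Adj w1 w4 ∧ ¬ G.Adj w1 w5 ∧ ¬ G.Adj w2 w4 ∧ ¬ G.Adj w2 w5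

/-- `w : Fin n → V` is an induced cycle of length `n` in `H`. -/
def SimpleGraph.IsInducedCycle {V : Type*} (H : SimpleGraph V) {n : ℕ} (w : Fin n → V) :
    Prop :=
  3 ≤ n ∧ Function.Injective w ∧
    ∀ i j : Fin n, H.Adj (w i) (w j) ↔
      ((j : ℕ) = ((i : ℕ) + 1) % n ∨ (i : ℕ) = ((j : ℕ) + 1) % n)

/-- A graph is chordal if it has no induced cycle of length at least four. -/
def SimpleGraph.Chordal {V : Type*} (H : SimpleGraph V) : Prop :=
  ∀ (n : ℕ), 4 ≤ n → ∀ w : Fin n → V, ¬ H.IsInducedCycle w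

/-! Monomial ideals, graded Betti numbers via the Taylor complex, and
Castelnuovo–Mumford regularity. -/

/-- The monomial ideal generated by the monomials with exponent vectors `gens`. -/
noncomputable def monomialSpan {V K : Type*} [CommRing K] {k : ℕ}
    (gens : Fin k → (V →₀ ℕ)) : Ideal (MvPolynomial V K) :=
  Ideal.span (Set.range fun i => monomial (gens i) (1 : K))

/-- The total degree of an exponent vector. -/
def monomialDegree {V : Type*} (m : V →₀ ℕ) : ℕ := m.sum fun _ n => n

/-- `m` is a minimal monomial generator of the monomial ideal `I`. -/
def IsMinimalMonomialGen {V K : Type*} [CommRing K] (I : Ideal (MvPolynomial V K))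
    (m : V →₀ ℕ) : Prop :=
  monomial m (1 : K) ∈ I ∧ ∀ m' : V →₀ ℕ, m' ≤ m → m' ≠ m → monomial m' (1 : K) ∉ I

/-- The lcm of the monomials `gens i`, `i ∈ T`. -/
noncomputable def taylorLcm {V : Type*} {k : ℕ} (gens : Fin k → (V →₀ ℕ))
    (T : Finset (Fin k)) : V →₀ ℕ :=
  T.sup gens

open Classical in
/-- The boundary of a basis element of the Taylor complex of `gens`, tensored with the
residue field `K`: only the terms where the lcm is unchanged survive. -/
noncomputable def taylorBoundary {V K : Type*} [Field K] {k : ℕ}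
    (gens : Fin k → (V →₀ ℕ)) (T : Finset (Fin k)) : Finset (Fin k) →₀ K :=
  ∑ t ∈ T, if taylorLcm gens (T.erase t) = taylorLcm gens T then
      ((-1 : K) ^ (T.filter fun s => s < t).card) • Finsupp.single (T.erase t) (1 : K)
    else 0

/-- The differential of the Taylor complex of `gens` tensored with `K`. -/
noncomputable def taylorDiff {V K : Type*} [Field K] {k : ℕ}
    (gens : Fin k → (V →₀ ℕ)) : (Finset (Fin k) →₀ K) →ₗ[K] (Finset (Fin k) →₀ K) :=
  Finsupp.lsum K fun T =>
    LinearMap.toSpanSingleton K (Finset (Fin k) →₀ K) (taylorBoundary gens T)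

/-- The graded piece of the Taylor complex in homological degree `i` and internal
degree `j`. -/
noncomputable def taylorPiece {V K : Type*} [Field K] {k : ℕ}
    (gens : Fin k → (V →₀ ℕ)) (i j : ℕ) : Submodule K (Finset (Fin k) →₀ K) :=
  Submodule.span K { f | ∃ T : Finset (Fin k), T.card = i ∧
    monomialDegree (taylorLcm gens T) = j ∧ f = Finsupp.single T (1 : K) }

/-- Nonvanishing of the degree-`j` part of the `i`-th homology of the Taylor complex
of `gens` tensored with `K`; since the Taylor complex is a graded free resolution of
`S/I` (where `I` is the ideal generated by the monomials `gens`), this says exactly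
that `Tor_i^S(S/I, K)_j ≠ 0`. -/
noncomputable def taylorHomologyNonzero {V K : Type*} [Field K] {k : ℕ}
    (gens : Fin k → (V →₀ ℕ)) (i j : ℕ) : Prop :=
  ¬ (LinearMap.ker (taylorDiff (K := K) gens) ⊓ taylorPiece (K := K) gens i j ≤
      Submodule.map (taylorDiff (K := K) gens) (taylorPiece (K := K) gens (i + 1) j))

/-- For a monomial ideal `I`, `Tor_i^S(I, K)_j ≠ 0`.  (Since
`Tor_i^S(I,K) ≅ Tor_{i+1}^S(S/I,K)`, this is computed from the Taylor complex on any
family of monomial generators of `I`.) -/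
def IdealTorNonzero {V K : Type*} [Field K] (I : Ideal (MvPolynomial V K))
    (i j : ℕ) : Prop :=
  ∃ (k : ℕ) (gens : Fin k → (V →₀ ℕ)), I = monomialSpan gens ∧
    taylorHomologyNonzero (K := K) gens (i + 1) j

/-- The Castelnuovo–Mumford regularity of a monomial ideal `I`:
`reg I = max { j - i : Tor_i^S(I, K)_j ≠ 0 }`. -/
noncomputable def reg {V K : Type*} [Field K] (I : Ideal (MvPolynomial V K)) : ℕ :=
  sSup { d | ∃ i j : ℕ, IdealTorNonzero I i j ∧ d = j - i }

/-!
The degree-`j` strand of the Taylor complex tensored with the residue field is spanned by the faces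
whose least common multiple has degree `j`, and its differential is the simplicial boundary. If
monomials of degree `t` can be ordered so that the colon ideals by the predecessors are generated by
variables, then splitting off the monomials one by one, the last one first, shows that all strands
but the linear one are exact, so that the regularity is `t`.

For the `t`-path ideal, order the edges colexicographically, and order the vertex sets of longer
paths by the least pair `(L, v)` such that `L` is the vertex set of a shorter path and `v` extends
it. For `t = 3` the condition on colon ideals is checked edge by edge. It then passes from `t` to
`t + 1` by an exchange property: if `L` is the vertex set of a path and `insert y L` is not, then
Pósa's rotations show that in a gap-free and claw-free graph `y`, if it has a neighbour in `L`, and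
the ends of the path are pendant in the graph induced on `insert y L`. As a path has at most two
pendant vertices, any vertex whose removal makes `insert y L` the vertex set of a path again is one
of these ends.
-/

open Finset

universe u

/-! ### Exactness of families of faces -/

section Boundary

variable {ι K : Type*} [LinearOrder ι] [CommRing K]

variable (K) in
/-- The coefficient of `T` in the simplicial boundary of `insert s T`, for `s ∉ T`. -/
def taylorSign (s : ι) (T : Finset ι) : K := (-1) ^ #{u ∈ T | u < s}

lemma taylorSign_mul_self (s : ι) (T : Finset ι) : taylorSign K s T * taylorSign K s T = 1 := by
  rw [taylorSign, ← mul_pow, neg_one_mul, neg_neg, one_pow]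

lemma taylorSign_insert {s u : ι} {T : Finset ι} (hu : u ∉ T) :
    taylorSign K s (insert u T) = (if u < s then -1 else 1) * taylorSign K s T := by
  unfold taylorSign
  rw [filter_insert]
  split_ifs
  · rw [card_insert_of_notMem (by simp [hu]), pow_succ']
  · rw [one_mul]

lemma taylorSign_erase_self (s : ι) (T : Finset ι) :
    taylorSign K s (T.erase s) = taylorSign K s T := by
  by_cases hs : s ∈ T
  · conv_rhs => rw [← insert_erase hs, taylorSign_insert (notMem_erase s T)]
    rw [if_neg (lt_irrefl s), one_mul]
  · rw [erase_eq_of_notMem hs]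

lemma taylorSign_swap {s u : ι} {T : Finset ι} (hs : s ∉ T) (hu : u ∉ T) (hsu : s ≠ u) :
    taylorSign K u T * taylorSign K s (insert u T) =
      -(taylorSign K s T * taylorSign K u (insert s T)) := by
  rw [taylorSign_insert hs, taylorSign_insert hu]
  rcases hsu.lt_or_gt with h | h
  · rw [if_pos h, if_neg h.not_gt]; ring
  · rw [if_pos h, if_neg h.not_gt]; ring

/-- The contracting homotopy of the full simplex given by coning off with apex `c`. -/
def coneHomotopy (c : ι) (x : Finset ι → K) (T : Finset ι) : K :=
  if c ∈ T then taylorSign K c T * x (T.erase c) else 0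

lemma coneHomotopy_of_notMem {c : ι} {T : Finset ι} (hc : c ∉ T) (x : Finset ι → K) :
    coneHomotopy c x T = 0 := if_neg hc

lemma coneHomotopy_insert {c : ι} {T : Finset ι} (hc : c ∉ T) (x : Finset ι → K) :
    coneHomotopy c x (insert c T) = taylorSign K c T * x T := by
  rw [coneHomotopy, if_pos (mem_insert_self c T), erase_insert hc, ← taylorSign_erase_self,
    erase_insert hc]

variable [Fintype ι]

/-- The boundary operator of the full simplex on `ι`. Chains are functions on the set of faces, and
a face is indexed by its number of vertices, so that `∅` is a face of degree `0`. -/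
def boundary : (Finset ι → K) →ₗ[K] (Finset ι → K) :=
  LinearMap.pi fun T => ∑ s ∈ Tᶜ, taylorSign K s T • LinearMap.proj (insert s T)

lemma boundary_apply (x : Finset ι → K) (T : Finset ι) :
    boundary x T = ∑ s ∈ Tᶜ, taylorSign K s T * x (insert s T) := by
  simp [boundary]

lemma boundary_congr {x y : Finset ι → K} {T : Finset ι}
    (h : ∀ s ∉ T, x (insert s T) = y (insert s T)) : boundary x T = boundary y T := by
  rw [boundary_apply, boundary_apply]
  exact sum_congr rfl fun s hs => by rw [h s (mem_compl.1 hs)]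

lemma exists_ne_zero_of_boundary_ne_zero {x : Finset ι → K} {T : Finset ι}
    (h : boundary x T ≠ 0) : ∃ s ∉ T, x (insert s T) ≠ 0 := by
  contrapose! h
  rw [boundary_congr (y := 0) h, map_zero, Pi.zero_apply]

lemma boundary_eq_single {x : Finset ι → K} {T : Finset ι} {c : ι} (hc : c ∉ T)
    (h : ∀ s ∉ T, s ≠ c → x (insert s T) = 0) :
    boundary x T = taylorSign K c T * x (insert c T) := by
  rw [boundary_apply]
  refine sum_eq_single_of_mem c (mem_compl.2 hc) fun s hs hsc => ?_
  rw [h s (mem_compl.1 hs) hsc, mul_zero]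

lemma boundary_boundary (x : Finset ι → K) : boundary (boundary x) = 0 := by
  ext T
  simp only [boundary_apply, mul_sum, sum_sigma', Pi.zero_apply]
  refine sum_involution (fun p _ => ⟨p.2, p.1⟩) ?_ ?_ ?_ (fun _ _ => rfl)
  · rintro ⟨s, u⟩ hp
    simp only [mem_sigma, mem_compl, mem_insert, not_or] at hp
    obtain ⟨hs, hus, hu⟩ := hp
    dsimp only
    rw [insert_comm s u T, ← mul_assoc, ← mul_assoc, taylorSign_swap hs hu (Ne.symm hus)]
    ring
  · rintro ⟨s, u⟩ hp - heq
    simp only [mem_sigma, mem_compl, mem_insert, not_or] at hp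
    exact hp.2.1 (Sigma.ext_iff.1 heq).1
  · rintro ⟨s, u⟩ hp
    simp only [mem_sigma, mem_compl, mem_insert, not_or] at hp ⊢
    exact ⟨hp.2.2, Ne.symm hp.2.1, hp.1⟩

lemma boundary_coneHomotopy_of_notMem {c : ι} {T : Finset ι} (hc : c ∉ T) (x : Finset ι → K) :
    boundary (coneHomotopy c x) T = x T := by
  rw [boundary_eq_single hc, coneHomotopy_insert hc, ← mul_assoc, taylorSign_mul_self, one_mul]
  intro s _ hsc
  exact coneHomotopy_of_notMem (by simp [hsc.symm, hc]) x

/- With `z = x - ∂ (cone x)`, which vanishes on the faces not containing `c` and satisfies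
`∂ z = ∂ x`, the only surviving term of `∂ x (T.erase c)` is the one of `z T`. -/
lemma boundary_coneHomotopy_add (c : ι) (x : Finset ι → K) :
    boundary (coneHomotopy c x) + coneHomotopy c (boundary x) = x := by
  ext T
  rw [Pi.add_apply]
  by_cases hc : c ∈ T
  · obtain ⟨T, hcT, rfl⟩ : ∃ T', c ∉ T' ∧ insert c T' = T :=
      ⟨T.erase c, notMem_erase c T, insert_erase hc⟩
    have hbd : boundary x = boundary (x - boundary (coneHomotopy c x)) := by
      rw [map_sub, boundary_boundary, sub_zero]
    have hz : ∀ s ∉ T, s ≠ c → (x - boundary (coneHomotopy c x)) (insert s T) = 0 := by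
      intro s _ hsc
      rw [Pi.sub_apply, boundary_coneHomotopy_of_notMem (by simp [hsc.symm, hcT]), sub_self]
    rw [coneHomotopy_insert hcT, hbd, boundary_eq_single hcT hz, ← mul_assoc, taylorSign_mul_self,
      one_mul, Pi.sub_apply, add_sub_cancel]
  · rw [boundary_coneHomotopy_of_notMem hc, coneHomotopy_of_notMem hc, add_zero]

end Boundary

section Exactness

variable {ι K : Type*} [LinearOrder ι] [Fintype ι] [CommRing K]

variable (K) in
/-- Exactness, at the faces with `i` vertices, of the complex spanned by a family `𝒯` of faces. Its
differential is `boundary` followed by the restriction to `𝒯`; this squares to zero when `𝒯` is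
order-connected, a subquotient of the full simplex. -/
def IsExactAt (𝒯 : Set (Finset ι)) (i : ℕ) : Prop :=
  ∀ x : Finset ι → K, (∀ T, x T ≠ 0 → T ∈ 𝒯 ∧ #T = i) → (∀ T ∈ 𝒯, boundary x T = 0) →
    ∃ w : Finset ι → K, (∀ T, w T ≠ 0 → T ∈ 𝒯 ∧ #T = i + 1) ∧ ∀ T ∈ 𝒯, boundary w T = x T

variable {𝒯 : Set (Finset ι)} {i : ℕ}

lemma IsExactAt.of_card_ne (h : ∀ T ∈ 𝒯, #T ≠ i) : IsExactAt K 𝒯 i := by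
  intro x hx _
  have hx0 : x = 0 := by
    ext T
    by_contra hT
    exact h T (hx T hT).1 (hx T hT).2
  exact ⟨0, fun T hT => absurd rfl hT, fun T _ => by rw [hx0, map_zero]⟩

lemma IsExactAt.of_insert_of_erase (c : ι) (hins : ∀ T ∈ 𝒯, insert c T ∈ 𝒯)
    (hers : ∀ T ∈ 𝒯, T.erase c ∈ 𝒯) : IsExactAt K 𝒯 i := by
  intro x hx hbd
  refine ⟨coneHomotopy c x, fun T hT => ?_, fun T hT => ?_⟩
  · by_cases hc : c ∈ T
    · rw [coneHomotopy, if_pos hc] at hT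
      obtain ⟨hmem, hcard⟩ := hx _ (right_ne_zero_of_mul hT)
      rw [← insert_erase hc, card_insert_of_notMem (notMem_erase c T), hcard]
      exact ⟨hins _ hmem, rfl⟩
    · exact absurd (coneHomotopy_of_notMem hc x) hT
  · have hzero : coneHomotopy c (boundary x) T = 0 := by
      rw [coneHomotopy, hbd _ (hers T hT), mul_zero, ite_self]
    simpa only [Pi.add_apply, hzero, add_zero] using
      congrFun (boundary_coneHomotopy_add c x) T

lemma boundary_indicator_boundary (h𝒯 : 𝒯.OrdConnected) {w : Finset ι → K}
    (hw : ∀ T, w T ≠ 0 → T ∈ 𝒯) {T : Finset ι} (hT : T ∈ 𝒯) :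
    boundary (𝒯.indicator (boundary w)) T = 0 := by
  calc boundary (𝒯.indicator (boundary w)) T = boundary (boundary w) T :=
        boundary_congr fun s _ => by
          refine Set.indicator_apply_eq_self.2 fun hsT => ?_
          by_contra hne
          obtain ⟨u, _, hwT⟩ := exists_ne_zero_of_boundary_ne_zero hne
          exact hsT (h𝒯.out hT (hw _ hwT) ⟨subset_insert s T, subset_insert u _⟩)
    _ = 0 := by rw [boundary_boundary, Pi.zero_apply]

/- The long exact sequence of a subcomplex and its quotient, at one spot. -/
lemma IsExactAt.of_isUpperSet {U : Set (Finset ι)} (hU : IsUpperSet U)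
    (h𝒯 : 𝒯.OrdConnected) (hinter : IsExactAt K (𝒯 ∩ U) i) (hdiff : IsExactAt K (𝒯 \ U) i) :
    IsExactAt K 𝒯 i := by
  have hUins : ∀ {T} s, T ∈ U → insert s T ∈ U := fun {T} s hT => hU (subset_insert s T) hT
  intro x hx hbd
  obtain ⟨w₁, hw₁, hbd₁⟩ := hinter (U.indicator x)
    (fun T hT => by
      obtain ⟨hTU, hT⟩ := Set.indicator_apply_ne_zero.1 hT
      exact ⟨⟨(hx T hT).1, hTU⟩, (hx T hT).2⟩)
    (fun T hT => by
      rw [← hbd T hT.1]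
      exact boundary_congr fun s _ => Set.indicator_of_mem (hUins s hT.2) x)
  set y := x - 𝒯.indicator (boundary w₁) with hy
  have hy_mem : ∀ T, y T ≠ 0 → T ∈ 𝒯 \ U ∧ #T = i := by
    intro T hT
    have hT𝒯 : T ∈ 𝒯 := by
      by_contra hmem
      have hxT : x T = 0 := by_contra fun h => hmem (hx T h).1
      exact hT (by rw [hy, Pi.sub_apply, hxT, Set.indicator_of_notMem hmem, sub_zero])
    rw [hy, Pi.sub_apply, Set.indicator_of_mem hT𝒯] at hT
    refine ⟨⟨hT𝒯, fun hTU => hT ?_⟩, ?_⟩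
    · rw [hbd₁ T ⟨hT𝒯, hTU⟩, Set.indicator_of_mem hTU, sub_self]
    · by_cases hxT : x T = 0
      · obtain ⟨s, hs, hwT⟩ :=
          exists_ne_zero_of_boundary_ne_zero (x := w₁) (T := T) (by simpa [hxT] using hT)
        simpa only [card_insert_of_notMem hs, Nat.add_right_cancel_iff] using (hw₁ _ hwT).2
      · exact (hx T hxT).2
  obtain ⟨w₂, hw₂, hbd₂⟩ := hdiff y hy_mem fun T hT => by
    rw [hy, map_sub, Pi.sub_apply, hbd T hT.1,
      boundary_indicator_boundary h𝒯 (fun T hT => (hw₁ T hT).1.1) hT.1, sub_zero]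
  refine ⟨w₁ + w₂, fun T hT => ?_, fun T hT => ?_⟩
  · by_cases hwT : w₁ T = 0
    · have := hw₂ T (by simpa [hwT] using hT)
      exact ⟨this.1.1, this.2⟩
    · exact ⟨(hw₁ T hwT).1.1, (hw₁ T hwT).2⟩
  · rw [map_add, Pi.add_apply]
    by_cases hTU : T ∈ U
    · have hwT : boundary w₂ T = 0 := by
        by_contra hne
        obtain ⟨s, _, hwT⟩ := exists_ne_zero_of_boundary_ne_zero hne
        exact (hw₂ _ hwT).1.2 (hUins s hTU)
      rw [hbd₁ T ⟨hT, hTU⟩, hwT, add_zero, Set.indicator_of_mem hTU]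
    · have hTdiff : T ∈ 𝒯 \ U := ⟨hT, hTU⟩
      rw [hbd₂ T hTdiff, hy, Pi.sub_apply, Set.indicator_of_mem hT, add_sub_cancel]

lemma not_isExactAt_of_isolated [Nontrivial K] {T : Finset ι} (hT : T ∈ 𝒯)
    (hins : ∀ s ∉ T, insert s T ∉ 𝒯) (hers : ∀ s ∈ T, T.erase s ∉ 𝒯) :
    ¬ IsExactAt K 𝒯 #T := by
  intro hexact
  have hsupp : ∀ T' : Finset ι, (Pi.single T 1 : Finset ι → K) T' ≠ 0 → T' = T := fun T' hT' =>
    by_contra fun hne => hT' (Pi.single_eq_of_ne hne 1)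
  obtain ⟨w, hw, hbd⟩ := hexact (Pi.single T 1)
    (fun T' hT' => by rw [hsupp T' hT']; exact ⟨hT, rfl⟩)
    (fun T' hT' => by
      by_contra hne
      obtain ⟨s, hs, hsT'⟩ := exists_ne_zero_of_boundary_ne_zero hne
      have hT'T := hsupp _ hsT'
      refine hers s (hT'T ▸ mem_insert_self s T') ?_
      rwa [← hT'T, erase_insert hs])
  have hne : boundary w T ≠ 0 := by
    rw [hbd T hT, Pi.single_eq_same]
    exact one_ne_zero
  obtain ⟨s, hs, hwT⟩ := exists_ne_zero_of_boundary_ne_zero hne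
  exact hins s hs (hw _ hwT).1

end Exactness

/-! ### Strands of the Taylor complex -/

section MonomialDegree

variable {V ι : Type*}

lemma monomialDegree_eq_degree (m : V →₀ ℕ) : monomialDegree m = m.degree := rfl

lemma monomialDegree_mono : Monotone (monomialDegree : (V →₀ ℕ) → ℕ) :=
  fun _ _ h => Finsupp.degree_mono h

lemma monomialDegree_sup_add_inf (m n : V →₀ ℕ) :
    monomialDegree (m ⊔ n) + monomialDegree (m ⊓ n) = monomialDegree m + monomialDegree n := by
  have hpt : m ⊔ n + m ⊓ n = m + n := by ext v; exact max_add_min (m v) (n v)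
  simp only [monomialDegree_eq_degree, ← map_add, hpt]

lemma eq_of_le_of_monomialDegree_le {m n : V →₀ ℕ} (hle : m ≤ n)
    (hdeg : monomialDegree n ≤ monomialDegree m) : m = n := by
  obtain ⟨d, rfl⟩ := exists_add_of_le hle
  simp only [monomialDegree_eq_degree, map_add] at hdeg
  rw [(Finsupp.degree_eq_zero_iff d).1 (by omega), add_zero]

lemma monomialDegree_sup_union_le [DecidableEq ι] {g : ι → (V →₀ ℕ)} {B C : Finset ι}
    (h : ∀ a ∈ C, monomialDegree (g a ⊔ B.sup g) ≤ monomialDegree (B.sup g) + 1) :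
    monomialDegree ((C ∪ B).sup g) ≤ monomialDegree (B.sup g) + #C := by
  induction C using Finset.induction_on with
  | empty => simp
  | insert a C ha ih =>
    have ih := ih fun b hb => h b (mem_insert_of_mem hb)
    have ha' := h a (mem_insert_self a C)
    have hB : B.sup g ≤ (C ∪ B).sup g := sup_mono subset_union_right
    have hmod := monomialDegree_sup_add_inf (g a ⊔ B.sup g) ((C ∪ B).sup g)
    rw [sup_assoc, sup_eq_right.2 hB] at hmod
    have hinf := monomialDegree_mono (le_inf le_sup_right hB :
      B.sup g ≤ (g a ⊔ B.sup g) ⊓ (C ∪ B).sup g)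
    rw [insert_union, sup_insert, card_insert_of_notMem ha]
    omega

end MonomialDegree

section DegreeWindow

variable {V ι K : Type*} {g : ι → (V →₀ ℕ)} {i j : ℕ} {B C : Finset ι}

/-- The faces between `B` and `C` whose least common multiple has degree `j`. The complex spanned by
the faces in `degreeWindow g j ∅ univ` is the degree-`j` strand of the Taylor complex of `g`
tensored with the residue field. -/
def degreeWindow (g : ι → (V →₀ ℕ)) (j : ℕ) (B C : Finset ι) : Set (Finset ι) :=
  {T | B ⊆ T ∧ T ⊆ C ∧ monomialDegree (T.sup g) = j}

lemma ordConnected_degreeWindow : (degreeWindow g j B C).OrdConnected := by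
  refine ⟨fun S hS T hT R hR => ⟨hS.1.trans hR.1, hR.2.trans hT.2.1, le_antisymm ?_ ?_⟩⟩
  · exact (monomialDegree_mono (sup_mono hR.2)).trans_eq hT.2.2
  · exact hS.2.2.symm.trans_le (monomialDegree_mono (sup_mono hR.1))

lemma degreeWindow_inter_mem [DecidableEq ι] (a : ι) :
    degreeWindow g j B C ∩ {T | a ∈ T} = degreeWindow g j (insert a B) C := by
  ext T
  simp only [degreeWindow, Set.mem_inter_iff, Set.mem_ofPred_eq, insert_subset_iff]
  tauto

lemma degreeWindow_diff_mem [DecidableEq ι] (a : ι) :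
    degreeWindow g j B C \ {T | a ∈ T} = degreeWindow g j B (C.erase a) := by
  ext T
  simp only [degreeWindow, Set.mem_sdiff, Set.mem_ofPred_eq, subset_erase]
  tauto

variable [LinearOrder ι] [Fintype ι] [CommRing K]

lemma IsExactAt.degreeWindow_of_insert_of_erase (a : ι)
    (hins : IsExactAt K (degreeWindow g j (insert a B) C) i)
    (hers : IsExactAt K (degreeWindow g j B (C.erase a)) i) :
    IsExactAt K (degreeWindow g j B C) i :=
  .of_isUpperSet (U := {T | a ∈ T}) (fun _ _ hle ha => hle ha) ordConnected_degreeWindow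
    (by rwa [degreeWindow_inter_mem]) (by rwa [degreeWindow_diff_mem])

lemma IsExactAt.degreeWindow_of_le_sup {c : ι} (hcB : c ∉ B) (hcC : c ∈ C) (hc : g c ≤ B.sup g) :
    IsExactAt K (degreeWindow g j B C) i := by
  refine .of_insert_of_erase c (fun T hT => ?_) (fun T hT => ?_)
  · have hsup : (insert c T).sup g = T.sup g := by
      rw [sup_insert, sup_eq_right.2 (hc.trans (sup_mono hT.1))]
    exact ⟨hT.1.trans (subset_insert c T), insert_subset hcC hT.2.1, by rw [hsup, hT.2.2]⟩
  · have hB : B ⊆ T.erase c := subset_erase.2 ⟨hT.1, hcB⟩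
    have hsup : T.sup g = (T.erase c).sup g := by
      by_cases hcT : c ∈ T
      · conv_lhs => rw [← insert_erase hcT]
        rw [sup_insert, sup_eq_right.2 (hc.trans (sup_mono hB))]
      · rw [erase_eq_of_notMem hcT]
    exact ⟨hB, (erase_subset c T).trans hT.2.1, by rw [← hsup, hT.2.2]⟩

lemma IsExactAt.degreeWindow_of_erase {a c : ι} (hca : c ≠ a) (hcB : c ∉ B) (hcC : c ∈ C)
    (hc : g c ≤ g a ⊔ B.sup g) (h : IsExactAt K (degreeWindow g j B (C.erase a)) i) :
    IsExactAt K (degreeWindow g j B C) i :=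
  .degreeWindow_of_insert_of_erase a
    (.degreeWindow_of_le_sup (by simp [hca, hcB]) hcC (by rwa [sup_insert])) h

/- The colon ideal of `B.sup g` is generated by variables. Redundant generators can be discarded;
when there are none left, every `g a` adds one to the degree of the least common multiple, so there
are no faces of degree `j` with `i` vertices. -/
lemma IsExactAt.degreeWindow_of_degree_sup_le (hij : monomialDegree (B.sup g) + i < j + #B)
    (h : ∀ a ∈ C \ B, ∃ a' ∈ C \ B, g a' ≤ g a ⊔ B.sup g ∧
      monomialDegree (g a' ⊔ B.sup g) ≤ monomialDegree (B.sup g) + 1) :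
    IsExactAt K (degreeWindow g j B C) i := by
  induction C using Finset.strongInduction with
  | H C ih =>
  by_cases hred : ∃ a ∈ C \ B, ∃ a' ∈ C \ B, a' ≠ a ∧ g a' ≤ g a ⊔ B.sup g
  · obtain ⟨a, ha, a', ha', hne, hle⟩ := hred
    obtain ⟨ha'C, ha'B⟩ := mem_sdiff.1 ha'
    refine .degreeWindow_of_erase hne ha'B ha'C hle
      (ih _ (erase_ssubset (mem_sdiff.1 ha).1) fun b hb => ?_)
    rw [erase_sdiff_comm] at hb ⊢
    obtain ⟨b', hb', hb'b, hdeg⟩ := h b (mem_of_mem_erase hb)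
    rcases eq_or_ne b' a with rfl | hb'a
    · have hsup : g a' ⊔ B.sup g ≤ g b' ⊔ B.sup g := sup_le hle le_sup_right
      exact ⟨a', mem_erase.2 ⟨hne, ha'⟩, hle.trans (sup_le hb'b le_sup_right),
        (monomialDegree_mono hsup).trans hdeg⟩
    · exact ⟨b', mem_erase.2 ⟨hb'a, hb'⟩, hb'b, hdeg⟩
  · have hdeg : ∀ a ∈ C \ B, monomialDegree (g a ⊔ B.sup g) ≤ monomialDegree (B.sup g) + 1 := by
      intro a ha
      obtain ⟨a', ha', hle, hdeg⟩ := h a ha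
      rcases eq_or_ne a' a with rfl | hne
      · exact hdeg
      · exact absurd ⟨a, ha, a', ha', hne, hle⟩ hred
    refine .of_card_ne fun T hT hcard => ?_
    have hle := monomialDegree_sup_union_le (g := g) (B := B) (C := T \ B) fun a ha =>
      hdeg a (sdiff_subset_sdiff hT.2.1 Subset.rfl ha)
    rw [sdiff_union_of_subset hT.1, hT.2.2, card_sdiff_of_subset hT.1] at hle
    have := card_le_card hT.1
    omega

lemma IsExactAt.degreeWindow_of_linearQuotients {α : Type*} [LinearOrder α] {ρ : ι → α}
    {s : Finset ι} (hρ : Set.InjOn ρ s) (hdeg : ∀ a ∈ s, monomialDegree (g a) + i < j)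
    (hlq : ∀ a ∈ s, ∀ b ∈ s, ρ b < ρ a → ∃ a' ∈ s, ρ a' < ρ a ∧ g a' ≤ g b ⊔ g a ∧
      monomialDegree (g a' ⊔ g a) ≤ monomialDegree (g a) + 1) :
    IsExactAt K (degreeWindow g j ∅ s) (i + 1) := by
  induction s using Finset.induction_on_max_value ρ with
  | empty =>
    refine .of_card_ne fun T hT hcard => ?_
    rw [subset_empty.1 hT.2.1] at hcard
    exact absurd hcard (Nat.succ_ne_zero i).symm
  | insert a s ha hmax ih =>
    have hlt : ∀ b ∈ s, ρ b < ρ a := fun b hb => (hmax b hb).lt_of_ne fun hab =>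
      ha (hρ (mem_coe.2 (mem_insert_of_mem hb)) (mem_coe.2 (mem_insert_self a s)) hab ▸ hb)
    have hmem : ∀ {b}, b ∈ insert a s → ρ b < ρ a → b ∈ s := fun {b} hb hba =>
      (mem_insert.1 hb).resolve_left fun h => hba.ne (congrArg ρ h)
    refine .degreeWindow_of_insert_of_erase a (.degreeWindow_of_degree_sup_le ?_ ?_) ?_
    · have := hdeg a (mem_insert_self a s)
      simp only [insert_empty_eq, sup_singleton, card_singleton]
      omega
    · simp only [insert_empty_eq, sup_singleton, sdiff_singleton_eq_erase, erase_insert ha]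
      intro b hb
      obtain ⟨a', ha', hρa', hle, hdeg'⟩ :=
        hlq a (mem_insert_self a s) b (mem_insert_of_mem hb) (hlt b hb)
      exact ⟨a', hmem ha' hρa', hle, hdeg'⟩
    · rw [erase_insert ha]
      refine ih (hρ.mono (coe_subset.2 (subset_insert a s)))
        (fun b hb => hdeg b (mem_insert_of_mem hb)) fun b hb c hc hcb => ?_
      obtain ⟨b', hb', hρb', hle, hdeg'⟩ :=
        hlq b (mem_insert_of_mem hb) c (mem_insert_of_mem hc) hcb
      exact ⟨b', hmem hb' (hρb'.trans (hlt b hb)), hρb', hle, hdeg'⟩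

lemma IsExactAt.degreeWindow_of_subset {s : Finset ι} (hsC : s ⊆ C)
    (hs : ∀ a ∈ C, ∃ c ∈ s, g c ≤ g a) (h : IsExactAt K (degreeWindow g j ∅ s) i) :
    IsExactAt K (degreeWindow g j ∅ C) i := by
  induction C using Finset.strongInduction with
  | H C ih =>
  rcases hsC.eq_or_ssubset with rfl | hss
  · exact h
  · obtain ⟨a, haC, has⟩ := exists_of_ssubset hss
    obtain ⟨c, hc, hle⟩ := hs a haC
    refine .degreeWindow_of_erase (ne_of_mem_of_not_mem hc has) (notMem_empty c) (hsC hc)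
      (hle.trans le_sup_left) (ih _ (erase_ssubset haC) (subset_erase.2 ⟨hsC, has⟩) ?_)
    exact fun b hb => hs b (mem_of_mem_erase hb)

end DegreeWindow

section Taylor

variable {V K : Type*} [Field K] {k i j : ℕ} {g : Fin k → (V →₀ ℕ)}

lemma mem_degreeWindow_empty_univ {T : Finset (Fin k)} :
    T ∈ degreeWindow g j ∅ univ ↔ monomialDegree (T.sup g) = j := by
  simp [degreeWindow]

lemma mem_taylorPiece {x : Finset (Fin k) →₀ K} :
    x ∈ taylorPiece g i j ↔ ∀ T, x T ≠ 0 → T ∈ degreeWindow g j ∅ univ ∧ #T = i := by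
  have hsupp : taylorPiece (K := K) g i j =
      Finsupp.supported K K {T | #T = i ∧ monomialDegree (T.sup g) = j} := by
    rw [Finsupp.supported_eq_span_single, taylorPiece]
    congr 1
    ext f
    simp only [Set.mem_image, Set.mem_ofPred_eq, taylorLcm, and_assoc, eq_comm]
  simp only [hsupp, Finsupp.mem_supported, Set.subset_def, mem_coe, Finsupp.mem_support_iff,
    Set.mem_ofPred_eq, mem_degreeWindow_empty_univ, and_comm]

lemma taylorBoundary_insert_apply {s : Fin k} {T : Finset (Fin k)} (hs : s ∉ T)
    [Decidable (T.sup g = (insert s T).sup g)] :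
    taylorBoundary (K := K) g (insert s T) T =
      if T.sup g = (insert s T).sup g then taylorSign K s T else 0 := by
  rw [taylorBoundary, Finsupp.finsetSum_apply, sum_eq_single_of_mem s (mem_insert_self s T)]
  · have hsign : (-1 : K) ^ #{u ∈ insert s T | u < s} = taylorSign K s T :=
      (taylorSign_insert hs).trans (by rw [if_neg (lt_irrefl s), one_mul])
    simp only [taylorLcm, erase_insert hs]
    split_ifs
    · simp [hsign]
    · rfl
  · intro u _ hus
    have hne : (insert s T).erase u ≠ T := fun h =>
      hs (h ▸ mem_erase.2 ⟨hus.symm, mem_insert_self s T⟩)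
    split_ifs
    · rw [Finsupp.smul_apply, Finsupp.single_eq_of_ne hne.symm, smul_zero]
    · rfl

lemma exists_insert_eq_of_taylorBoundary_ne_zero {S T : Finset (Fin k)}
    (h : taylorBoundary (K := K) g S T ≠ 0) : ∃ s ∉ T, insert s T = S := by
  contrapose! h
  rw [taylorBoundary, Finsupp.finsetSum_apply]
  refine sum_eq_zero fun u hu => ?_
  have hne : S.erase u ≠ T := fun hT => h u (hT ▸ notMem_erase u S) (hT ▸ insert_erase hu)
  split_ifs
  · rw [Finsupp.smul_apply, Finsupp.single_eq_of_ne hne.symm, smul_zero]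
  · rfl

lemma taylorDiff_apply (x : Finset (Fin k) →₀ K) (T : Finset (Fin k)) :
    taylorDiff g x T = ∑ s ∈ Tᶜ, x (insert s T) * taylorBoundary g (insert s T) T := by
  calc taylorDiff g x T = ∑ S, x S * taylorBoundary g S T := by
        rw [taylorDiff, Finsupp.lsum_apply, Finsupp.sum_fintype _ _ fun _ => map_zero _,
          Finsupp.finsetSum_apply]
        rfl
    _ = ∑ S ∈ Tᶜ.image (insert · T), x S * taylorBoundary g S T := by
        refine (sum_subset (subset_univ _) fun S _ hS => ?_).symm
        by_contra hne
        obtain ⟨s, hs, rfl⟩ := exists_insert_eq_of_taylorBoundary_ne_zero (right_ne_zero_of_mul hne)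
        exact hS (mem_image_of_mem _ (mem_compl.2 hs))
    _ = ∑ s ∈ Tᶜ, x (insert s T) * taylorBoundary g (insert s T) T := by
        refine sum_image fun s hs u _ hsu => ?_
        have hmem : s ∈ insert u T := by rw [← hsu]; exact mem_insert_self s T
        exact (mem_insert.1 hmem).resolve_right (mem_compl.1 hs)

/- Faces of equal degree, one containing the other, have the same least common multiple. -/
lemma taylorDiff_apply_of_mem_taylorPiece {x : Finset (Fin k) →₀ K} (hx : x ∈ taylorPiece g i j)
    (T : Finset (Fin k)) :
    taylorDiff g x T = (degreeWindow g j ∅ univ).indicator (boundary x) T := by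
  classical
  have hdeg : ∀ s, x (insert s T) ≠ 0 → monomialDegree ((insert s T).sup g) = j := fun s hs =>
    mem_degreeWindow_empty_univ.1 (mem_taylorPiece.1 hx _ hs).1
  rw [taylorDiff_apply, Set.indicator_apply, boundary_apply, mem_degreeWindow_empty_univ]
  split_ifs with hT
  · refine sum_congr rfl fun s hs => ?_
    by_cases hxs : x (insert s T) = 0
    · rw [hxs, zero_mul, mul_zero]
    · have hsup : T.sup g = (insert s T).sup g :=
        eq_of_le_of_monomialDegree_le (sup_mono (subset_insert s T)) (by rw [hdeg s hxs, hT])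
      rw [taylorBoundary_insert_apply (mem_compl.1 hs), if_pos hsup, mul_comm]
  · refine sum_eq_zero fun s hs => ?_
    by_cases hxs : x (insert s T) = 0
    · rw [hxs, zero_mul]
    · rw [taylorBoundary_insert_apply (mem_compl.1 hs), if_neg, mul_zero]
      exact fun hsup => hT (by rw [hsup, hdeg s hxs])

lemma taylorHomologyNonzero_iff :
    taylorHomologyNonzero (K := K) g i j ↔ ¬ IsExactAt K (degreeWindow g j ∅ univ) i := by
  have hboundary : ∀ {m : ℕ} {x : Finset (Fin k) →₀ K}, x ∈ taylorPiece g m j →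
      ∀ T ∈ degreeWindow g j ∅ univ, taylorDiff g x T = boundary x T := fun hx T hT => by
    rw [taylorDiff_apply_of_mem_taylorPiece hx, Set.indicator_of_mem hT]
  refine not_congr ⟨fun h x hx hbd => ?_, fun h x hx => ?_⟩
  · have hpiece : Finsupp.equivFunOnFinite.symm x ∈ taylorPiece (K := K) g i j :=
      mem_taylorPiece.2 hx
    have hker : taylorDiff g (Finsupp.equivFunOnFinite.symm x) = 0 := by
      ext T
      rw [taylorDiff_apply_of_mem_taylorPiece hpiece]
      exact Set.indicator_apply_eq_zero.2 (hbd T)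
    obtain ⟨w, hw, hwx⟩ := h ⟨hker, hpiece⟩
    refine ⟨w, mem_taylorPiece.1 hw, fun T hT => ?_⟩
    rw [← hboundary hw T hT, hwx]
    rfl
  · obtain ⟨hker, hpiece⟩ := hx
    obtain ⟨w, hw, hwx⟩ := h x (mem_taylorPiece.1 hpiece) fun T hT => by
      rw [← hboundary hpiece T hT, LinearMap.mem_ker.1 hker, Finsupp.zero_apply]
    have hwpiece : Finsupp.equivFunOnFinite.symm w ∈ taylorPiece (K := K) g (i + 1) j :=
      mem_taylorPiece.2 hw
    refine ⟨_, hwpiece, ?_⟩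
    ext T
    by_cases hT : T ∈ degreeWindow g j ∅ univ
    · rw [hboundary hwpiece T hT]
      exact hwx T hT
    · rw [taylorDiff_apply_of_mem_taylorPiece hwpiece, Set.indicator_of_notMem hT]
      exact (by_contra fun hne => hT (mem_taylorPiece.1 hpiece T (Ne.symm hne)).1)

end Taylor

/-! ### Linear quotients -/

section LinearQuotients

variable {V : Type u} {K : Type*}

/-- The monomials with exponents in `𝓔` can be linearly ordered (by the values of `r`) so that the
colon ideals of each of them by its predecessors are generated by variables: any predecessor `n` of
`m` can be replaced by a predecessor `p` such that `p / gcd p m` divides `n / gcd n m` and is at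
most a variable. -/
def HasLinearQuotients (𝓔 : Set (V →₀ ℕ)) : Prop :=
  ∃ (α : Type u) (_ : LinearOrder α) (r : (V →₀ ℕ) → α), Set.InjOn r 𝓔 ∧
    ∀ m ∈ 𝓔, ∀ n ∈ 𝓔, r n < r m → ∃ p ∈ 𝓔, r p < r m ∧ p ≤ n ⊔ m ∧
      monomialDegree (p ⊔ m) ≤ monomialDegree m + 1

lemma monomial_mem_span_monomial_iff [CommSemiring K] [Nontrivial K] {𝓔 : Set (V →₀ ℕ)}
    {m : V →₀ ℕ} :
    monomial m (1 : K) ∈ Ideal.span ((fun n => monomial n (1 : K)) '' 𝓔) ↔ ∃ n ∈ 𝓔, n ≤ m := by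
  classical
  rw [mem_ideal_span_monomial_image, support_monomial, if_neg one_ne_zero]
  simp

lemma monomialSpan_eq_span_image [CommRing K] {k : ℕ} (g : Fin k → (V →₀ ℕ)) :
    monomialSpan (K := K) g = Ideal.span ((fun n => monomial n (1 : K)) '' Set.range g) := by
  rw [monomialSpan, ← Set.range_comp, Function.comp_def]

variable [Field K] {t : ℕ} {𝓔 : Set (V →₀ ℕ)}

lemma subset_range_of_span_eq_monomialSpan (hdeg : ∀ m ∈ 𝓔, monomialDegree m = t) {k : ℕ}
    {g : Fin k → (V →₀ ℕ)}
    (h : Ideal.span ((fun m => monomial m (1 : K)) '' 𝓔) = monomialSpan g) :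
    𝓔 ⊆ Set.range g ∧ ∀ a, ∃ m ∈ 𝓔, m ≤ g a := by
  rw [monomialSpan_eq_span_image] at h
  have hbelow : ∀ a, ∃ m ∈ 𝓔, m ≤ g a := fun a => by
    rw [← monomial_mem_span_monomial_iff (K := K), h, monomial_mem_span_monomial_iff]
    exact ⟨g a, Set.mem_range_self a, le_rfl⟩
  refine ⟨fun m hm => ?_, hbelow⟩
  obtain ⟨_, ⟨a, rfl⟩, ham⟩ : ∃ n ∈ Set.range g, n ≤ m := by
    rw [← monomial_mem_span_monomial_iff (K := K), ← h, monomial_mem_span_monomial_iff]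
    exact ⟨m, hm, le_rfl⟩
  obtain ⟨n, hn, hna⟩ := hbelow a
  have hnm : n = m :=
    eq_of_le_of_monomialDegree_le (hna.trans ham) (by rw [hdeg m hm, hdeg n hn])
  exact ⟨a, le_antisymm ham (hnm ▸ hna)⟩

lemma HasLinearQuotients.le_add_of_idealTorNonzero (hlq : HasLinearQuotients 𝓔)
    (hdeg : ∀ m ∈ 𝓔, monomialDegree m = t) {i j : ℕ}
    (h : IdealTorNonzero (Ideal.span ((fun m => monomial m (1 : K)) '' 𝓔)) i j) : j ≤ t + i := by
  obtain ⟨k, g, hspan, hne⟩ := h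
  obtain ⟨hrange, hbelow⟩ := subset_range_of_span_eq_monomialSpan hdeg hspan
  obtain ⟨α, _, r, hinj, hr⟩ := hlq
  obtain ⟨s, -, hs⟩ := Set.SurjOn.exists_bijOn_subset (f := g) (s := Set.univ) (t := 𝓔)
    (by rwa [Set.SurjOn, Set.image_univ])
  lift s to Finset (Fin k) using s.toFinite
  contrapose! hne
  rw [taylorHomologyNonzero_iff, not_not]
  refine .degreeWindow_of_subset (subset_univ s) (fun a _ => ?_)
    (.degreeWindow_of_linearQuotients (ρ := r ∘ g) (hinj.comp hs.injOn hs.mapsTo)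
      (fun a ha => by rwa [hdeg _ (hs.mapsTo ha)]) fun a ha b hb hba => ?_)
  · obtain ⟨m, hm, hle⟩ := hbelow a
    obtain ⟨c, hc, rfl⟩ := hs.surjOn hm
    exact ⟨c, hc, hle⟩
  · obtain ⟨p, hp, hlt, hle, hpdeg⟩ := hr _ (hs.mapsTo ha) _ (hs.mapsTo hb) hba
    obtain ⟨c, hc, rfl⟩ := hs.surjOn hp
    exact ⟨c, hc, hlt, hle, hpdeg⟩

lemma idealTorNonzero_zero (hfin : 𝓔.Finite) (hne : 𝓔.Nonempty) (ht : 0 < t)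
    (hdeg : ∀ m ∈ 𝓔, monomialDegree m = t) :
    IdealTorNonzero (Ideal.span ((fun m => monomial m (1 : K)) '' 𝓔)) 0 t := by
  obtain ⟨k, g, rfl⟩ := hfin.fin_embedding
  obtain ⟨_, a, rfl⟩ := hne
  have hg : ∀ a, monomialDegree (g a) = t := fun a => hdeg _ (Set.mem_range_self a)
  refine ⟨k, g, (monomialSpan_eq_span_image g).symm, taylorHomologyNonzero_iff.2 ?_⟩
  rw [zero_add, ← card_singleton a]
  refine not_isExactAt_of_isolated ?_ (fun s hs hmem => ?_) fun s hs hmem => ?_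
  · rw [mem_degreeWindow_empty_univ, sup_singleton, hg]
  · rw [mem_degreeWindow_empty_univ, sup_insert, sup_singleton] at hmem
    have hsup : ∀ b, g b ≤ g s ⊔ g a → g b = g s ⊔ g a := fun b hb =>
      eq_of_le_of_monomialDegree_le hb (by rw [hmem, hg])
    exact hs (mem_singleton.2 (g.injective
      ((hsup s le_sup_left).trans (hsup a le_sup_right).symm)))
  · rw [mem_singleton.1 hs, erase_singleton, mem_degreeWindow_empty_univ, sup_empty] at hmem
    exact ht.ne hmem

theorem HasLinearQuotients.reg_span_monomial (hlq : HasLinearQuotients 𝓔) (hfin : 𝓔.Finite)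
    (hne : 𝓔.Nonempty) (ht : 0 < t) (hdeg : ∀ m ∈ 𝓔, monomialDegree m = t) :
    reg (Ideal.span ((fun m => monomial m (1 : K)) '' 𝓔)) = t := by
  refine IsGreatest.csSup_eq ⟨⟨0, t, idealTorNonzero_zero hfin hne ht hdeg, rfl⟩, ?_⟩
  rintro _ ⟨i, j, h, rfl⟩
  exact Nat.sub_le_of_le_add (hlq.le_add_of_idealTorNonzero hdeg h)

end LinearQuotients

section Squarefree

variable {V : Type u}

/-- The exponent vector of the squarefree monomial with support `W`. -/
noncomputable def squarefreeExponent (W : Finset V) : V →₀ ℕ := ∑ v ∈ W, Finsupp.single v 1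

lemma squarefreeExponent_apply [DecidableEq V] (W : Finset V) (v : V) :
    squarefreeExponent W v = if v ∈ W then 1 else 0 := by
  simp [squarefreeExponent, Finsupp.finsetSum_apply, Finsupp.single_apply]

lemma support_squarefreeExponent (W : Finset V) : (squarefreeExponent W).support = W := by
  classical
  ext v
  simp [squarefreeExponent_apply]

lemma monomialDegree_squarefreeExponent (W : Finset V) :
    monomialDegree (squarefreeExponent W) = #W := by
  simp [monomialDegree_eq_degree, squarefreeExponent]

lemma squarefreeExponent_mono : Monotone (squarefreeExponent (V := V)) := fun _ _ h =>
  sum_le_sum_of_subset h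

lemma squarefreeExponent_sup [DecidableEq V] (U W : Finset V) :
    squarefreeExponent U ⊔ squarefreeExponent W = squarefreeExponent (U ∪ W) := by
  ext v
  by_cases hU : v ∈ U <;> by_cases hW : v ∈ W <;> simp [squarefreeExponent_apply, hU, hW]

lemma prod_map_X_eq_monomial {K : Type*} [CommSemiring K] [DecidableEq V] {l : List V}
    (hl : l.Nodup) : (l.map (X (R := K))).prod = monomial (squarefreeExponent l.toFinset) 1 := by
  rw [← List.prod_toFinset _ hl, squarefreeExponent, monomial_sum_one]
  rfl

/-- Linear quotients of the squarefree monomials with supports in `𝓕`, in terms of sets: any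
predecessor `U` of `W` can be replaced by one with at most one element outside `W`, which lies
in `U`. -/
def HasSetLinearQuotients (𝓕 : Set (Finset V)) : Prop :=
  ∃ (α : Type u) (_ : LinearOrder α) (r : Finset V → α), Set.InjOn r 𝓕 ∧
    ∀ W ∈ 𝓕, ∀ U ∈ 𝓕, r U < r W → ∃ W' ∈ 𝓕, r W' < r W ∧ ∃ y ∈ U, (W' : Set V) ⊆ insert y W

lemma HasSetLinearQuotients.hasLinearQuotients {𝓕 : Set (Finset V)}
    (h : HasSetLinearQuotients 𝓕) : HasLinearQuotients (squarefreeExponent '' 𝓕) := by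
  classical
  obtain ⟨α, _, r, hinj, hr⟩ := h
  refine ⟨α, inferInstance, fun m => r m.support, ?_, ?_⟩
  · rintro _ ⟨W, hW, rfl⟩ _ ⟨U, hU, rfl⟩ heq
    simp only [support_squarefreeExponent] at heq
    rw [hinj hW hU heq]
  · rintro _ ⟨W, hW, rfl⟩ _ ⟨U, hU, rfl⟩ hlt
    simp only [support_squarefreeExponent] at hlt
    obtain ⟨W', hW', hlt', y, hy, hsub⟩ := hr W hW U hU hlt
    have hsub : W' ⊆ insert y W := by rwa [← coe_subset, coe_insert]
    refine ⟨_, ⟨W', hW', rfl⟩, by simpa only [support_squarefreeExponent], ?_, ?_⟩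
    · rw [squarefreeExponent_sup]
      exact squarefreeExponent_mono (hsub.trans
        (insert_subset (mem_union_left W hy) subset_union_right))
    · rw [squarefreeExponent_sup, monomialDegree_squarefreeExponent,
        monomialDegree_squarefreeExponent]
      exact (card_le_card (union_subset hsub (subset_insert y W))).trans (card_insert_le y W)

end Squarefree

/-! ### Blocked paths and Pósa rotations -/

section BlockedPath

variable {V : Type*} {G : SimpleGraph V} {y p q c d e f x u : V} {l s r : List V}

/-- `l` is a path of `G` missing the vertex `y`, and `y :: l` cannot be rearranged into a path. -/
structure IsBlockedPath (G : SimpleGraph V) (y : V) (l : List V) : Prop where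
  isChain : l.IsChain G.Adj
  nodup : (y :: l).Nodup
  not_isChain : ∀ m : List V, m.Perm (y :: l) → ¬ m.IsChain G.Adj

namespace IsBlockedPath

lemma of_perm (h : IsBlockedPath G y l) {l' : List V} (hl' : l'.Perm l)
    (hchain : l'.IsChain G.Adj) : IsBlockedPath G y l' where
  isChain := hchain
  nodup := (hl'.cons y).nodup_iff.2 h.nodup
  not_isChain m hm := h.not_isChain m (hm.trans (hl'.cons y))

lemma reverse (h : IsBlockedPath G y l) : IsBlockedPath G y l.reverse := by
  refine h.of_perm l.reverse_perm (List.isChain_reverse.2 ?_)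
  simpa only [SimpleGraph.adj_comm] using h.isChain

/- Pósa's rotation. -/
lemma rotate (h : IsBlockedPath G y (p :: (s ++ u :: x :: r))) (hpx : G.Adj p x) :
    IsBlockedPath G y (u :: (s.reverse ++ p :: x :: r)) := by
  have hrev : u :: (s.reverse ++ p :: x :: r) = (p :: (s ++ [u])).reverse ++ x :: r := by simp
  have hsplit : p :: (s ++ u :: x :: r) = (p :: (s ++ [u])) ++ x :: r := by simp
  have hchain := h.isChain
  rw [hsplit, List.isChain_append] at hchain
  refine h.of_perm ?_ ?_
  · rw [hrev, hsplit]
    exact (List.reverse_perm _).append_right _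
  · rw [hrev, List.isChain_append, List.isChain_reverse]
    refine ⟨by simpa only [SimpleGraph.adj_comm] using hchain.1, hchain.2.1, ?_⟩
    simpa only [List.getLast?_reverse, List.head?_cons, Option.mem_some_iff, forall_eq'] using hpx

lemma ne_of_mem (h : IsBlockedPath G y l) (hx : x ∈ l) : y ≠ x :=
  fun hyx => (List.nodup_cons.1 h.nodup).1 (hyx ▸ hx)

lemma not_adj_head (h : IsBlockedPath G y (p :: l)) : ¬ G.Adj y p := fun hyp =>
  h.not_isChain _ (.refl _) (List.isChain_cons_cons.2 ⟨hyp, h.isChain⟩)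

lemma not_adj_last (h : IsBlockedPath G y (s ++ [q])) : ¬ G.Adj y q := by
  have hrev := h.reverse
  rw [List.reverse_append, List.reverse_singleton] at hrev
  exact hrev.not_adj_head

lemma adj_next (h : IsBlockedPath G y (s ++ u :: x :: r)) : G.Adj u x :=
  (List.isChain_append_cons_cons.1 h.isChain).2.1

lemma not_adj_next (h : IsBlockedPath G y (s ++ u :: x :: r)) (hyu : G.Adj y u) :
    ¬ G.Adj y x := by
  intro hyx
  have hchain := h.isChain
  rw [List.isChain_append_cons_cons] at hchain
  refine h.not_isChain (s ++ u :: y :: x :: r) ?_ ?_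
  · simpa using List.perm_middle (a := y) (l₁ := s ++ [u]) (l₂ := x :: r)
  · simp only [List.isChain_append_cons_cons, List.isChain_cons_cons]
    exact ⟨hchain.1, hyu.symm, hyx, hchain.2.2⟩

/- Inserting `y` between `c` and `d` and reversing the segment from `e` to `d` gives the path
`…, c, y, d, …, e, f, …`. -/
lemma not_adj_of_detour (h : IsBlockedPath G y (s ++ c :: e :: (r ++ d :: f :: l)))
    (hyc : G.Adj y c) (hyd : G.Adj y d) : ¬ G.Adj e f := by
  intro hef
  have hchain := h.isChain
  rw [List.isChain_append_cons_cons, ← List.cons_append, List.isChain_append_cons_cons] at hchain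
  obtain ⟨hsc, -, hed, -, hfl⟩ := hchain
  have hde : (d :: r.reverse ++ [e]).IsChain G.Adj := by
    have hrev : d :: r.reverse ++ [e] = (e :: r ++ [d]).reverse := by simp
    rw [hrev, List.isChain_reverse]
    simpa only [SimpleGraph.adj_comm] using hed
  refine h.not_isChain (s ++ c :: y :: (d :: r.reverse ++ e :: f :: l)) ?_ ?_
  · have hseg : (d :: r.reverse ++ e :: f :: l).Perm (e :: (r ++ d :: f :: l)) := by
      have hrev : d :: r.reverse ++ e :: f :: l = (e :: r ++ [d]).reverse ++ f :: l := by simp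
      rw [hrev]
      simpa using (List.reverse_perm (e :: r ++ [d])).append_right (f :: l)
    have := List.perm_middle (a := y) (l₁ := s ++ [c]) (l₂ := d :: r.reverse ++ e :: f :: l)
    simp only [List.append_assoc, List.singleton_append] at this
    exact this.trans ((hseg.cons c).append_left s |>.cons y)
  · rw [List.isChain_append_cons_cons]
    refine ⟨hsc, hyc.symm, List.isChain_cons_cons.2 ⟨hyd, ?_⟩⟩
    exact List.isChain_append_cons_cons.2 ⟨hde, hef, hfl⟩

variable (hclaw : G.ClawFree)
include hclaw

lemma not_adj_of_adj (h : IsBlockedPath G y (p :: l)) (hc : c ∈ p :: l) (hyc : G.Adj y c) :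
    ¬ G.Adj p c := by
  intro hpc
  have hyp := h.not_adj_head
  obtain ⟨s, r, rfl⟩ := List.append_of_mem ((List.mem_cons.1 hc).resolve_left hpc.ne')
  rcases r with _ | ⟨w, r⟩
  · exact not_adj_last (s := p :: s) h hyc
  · have hyw : ¬ G.Adj y w := not_adj_next (s := p :: s) h hyc
    have hcw : G.Adj c w := adj_next (s := p :: s) h
    have hpw : G.Adj p w := by
      have hne : p ≠ w := by
        rintro rfl
        simpa using (List.nodup_cons.1 h.nodup).2
      have := hclaw c y p w hyc.symm hpc.symm hcw (h.ne_of_mem (by simp))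
        (h.ne_of_mem (by simp)) hne
      tauto
    exact (h.rotate hpw).not_adj_head hyc

variable (hgap : G.GapFree)
include hgap

lemma adj_of_adj_head (h : IsBlockedPath G y (p :: l)) (hc : c ∈ p :: l) (hyc : G.Adj y c)
    (hx : x ∈ p :: l) (hpx : G.Adj p x) : G.Adj x c := by
  have hyp := h.not_adj_head
  have hpc := h.not_adj_of_adj hclaw hc hyc
  have hyx : ¬ G.Adj y x := fun hyx => h.not_adj_of_adj hclaw hx hyx hpx
  have := hgap y c p x hyc hpx (h.ne_of_mem (by simp)) (h.ne_of_mem hx)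
    (by rintro rfl; exact hyp hyc) (by rintro rfl; exact hpc hpx)
  rw [G.adj_comm c p, G.adj_comm c x] at this
  tauto

/- Let `u` be the predecessor of `x`. Rotating along `p x` makes `u` an end, so `u` is not adjacent
to `c`; the claw at `x` with leaves `p`, `u`, `c` then makes `p` adjacent to `u`, and descending
along the path one reaches `q`, which is adjacent to `c`. -/
lemma not_adj_head_of_append (h : IsBlockedPath G y (p :: q :: (s ++ x :: r)))
    (hc : c ∈ p :: q :: (s ++ x :: r)) (hyc : G.Adj y c) : ¬ G.Adj p x := by
  induction s using List.reverseRecOn generalizing x r with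
  | nil =>
    intro hpx
    have hpq : G.Adj p q := adj_next (s := []) h
    have hqc : G.Adj q c := h.adj_of_adj_head hclaw hgap hc hyc (by simp) hpq
    have hrot : IsBlockedPath G y (q :: p :: x :: r) := h.rotate (s := []) hpx
    exact hrot.not_adj_of_adj hclaw (by simp at hc ⊢; tauto) hyc hqc
  | append_singleton s u ih =>
    rw [List.append_assoc, List.singleton_append] at h hc
    intro hpx
    have hxc : G.Adj x c := h.adj_of_adj_head hclaw hgap hc hyc (by simp) hpx
    have hpc : ¬ G.Adj p c := h.not_adj_of_adj hclaw hc hyc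
    have hrot := h.rotate (s := q :: s) hpx
    have huc : ¬ G.Adj u c := hrot.not_adj_of_adj hclaw (by simp at hc ⊢; tauto) hyc
    have hux : G.Adj u x := adj_next (s := p :: q :: s) h
    have hpu : p ≠ u := by
      rintro rfl
      simpa using (List.nodup_cons.1 h.nodup).2
    have hcne : p ≠ c ∧ u ≠ c := by
      constructor
      · rintro rfl; exact h.not_adj_head hyc
      · rintro rfl; exact hrot.not_adj_head hyc
    have := hclaw x p u c hpx.symm hux.symm hxc hpu hcne.1 hcne.2
    exact ih h hc (by tauto)

lemma adj_head_iff (h : IsBlockedPath G y (p :: q :: l)) (hc : c ∈ p :: q :: l) (hyc : G.Adj y c)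
    (hx : x ∈ p :: q :: l) : G.Adj p x ↔ x = q := by
  refine ⟨fun hpx => ?_, fun hxq => hxq ▸ adj_next (s := []) h⟩
  rcases List.mem_cons.1 hx with rfl | hx
  · exact (G.loopless.irrefl _ hpx).elim
  · rcases List.mem_cons.1 hx with rfl | hx
    · rfl
    · obtain ⟨s, r, rfl⟩ := List.append_of_mem hx
      exact (h.not_adj_head_of_append hclaw hgap hc hyc hpx).elim

lemma adj_second_next (h : IsBlockedPath G y (p :: q :: (s ++ c :: e :: l)))
    (hyc : G.Adj y c) : G.Adj q e := by
  have hpq : G.Adj p q := adj_next (s := []) h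
  have hce : G.Adj c e := adj_next (s := p :: q :: s) h
  have hqc : G.Adj q c := h.adj_of_adj_head hclaw hgap (by simp) hyc (by simp) hpq
  have hyq : ¬ G.Adj y q := fun hyq => h.not_adj_of_adj hclaw (by simp) hyq hpq
  have hye : ¬ G.Adj y e := not_adj_next (s := p :: q :: s) h hyc
  have heq : e ≠ q := by
    rintro rfl
    simpa using (List.nodup_cons.1 (List.nodup_cons.1 h.nodup).2).2
  have := hclaw c y e q hyc.symm hce hqc.symm (h.ne_of_mem (by simp)) (h.ne_of_mem (by simp)) heq
  rw [G.adj_comm e q] at this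
  tauto

/- If `y` had two neighbours `c`, `d` on the path `p, q, …, c, e, …, d, f, …`, then the claw at `q`
with leaves `p`, `e`, `f` would make `e` and `f` adjacent. -/
lemma not_adj_of_append (h : IsBlockedPath G y (p :: q :: (s ++ c :: (r ++ d :: l))))
    (hyc : G.Adj y c) : ¬ G.Adj y d := by
  intro hyd
  rcases r with _ | ⟨e, r⟩
  · exact not_adj_next (s := p :: q :: s) h hyc hyd
  rcases l with _ | ⟨f, l⟩
  · exact not_adj_last (s := p :: q :: (s ++ c :: e :: r)) (by simpa using h) hyd
  have hpq : G.Adj p q := adj_next (s := []) h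
  have hqe : G.Adj q e := h.adj_second_next hclaw hgap hyc
  have hqf : G.Adj q f :=
    adj_second_next (s := s ++ c :: e :: r) hclaw hgap (by simpa using h) hyd
  have hnodup := (List.nodup_cons.1 h.nodup).2
  simp only [List.cons_append, List.nodup_cons, List.nodup_append, List.mem_cons, List.mem_append,
    not_or] at hnodup
  obtain ⟨⟨-, -, -, hpe, -, -, hpf, -⟩, ⟨-, -, hqe', -, -, hqf', -⟩, -,
    ⟨-, ⟨-, -, hef, -⟩, -⟩, -⟩ := hnodup
  have hpe' : ¬ G.Adj p e := fun hpe =>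
    hqe' ((h.adj_head_iff hclaw hgap (by simp) hyc (by simp)).1 hpe).symm
  have hpf' : ¬ G.Adj p f := fun hpf =>
    hqf' ((h.adj_head_iff hclaw hgap (by simp) hyc (by simp)).1 hpf).symm
  have hef' : G.Adj e f := by
    have := hclaw q p e f hpq.symm hqe hqf hpe hpf hef
    tauto
  exact not_adj_of_detour (s := p :: q :: s) h hyc hyd hef'

lemma eq_of_adj (h : IsBlockedPath G y (p :: q :: l)) (hc : c ∈ p :: q :: l)
    (hd : d ∈ p :: q :: l) (hyc : G.Adj y c) (hyd : G.Adj y d) : c = d := by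
  have hpq : G.Adj p q := adj_next (s := []) h
  have mem_tail {x : V} (hx : x ∈ p :: q :: l) (hyx : G.Adj y x) : x ∈ l := by
    rcases List.mem_cons.1 hx with rfl | hx
    · exact (h.not_adj_head hyx).elim
    · rcases List.mem_cons.1 hx with rfl | hx
      · exact (h.not_adj_of_adj hclaw (by simp) hyx hpq).elim
      · exact hx
  by_contra hcd
  obtain ⟨s, r, rfl⟩ := List.append_of_mem (mem_tail hc hyc)
  have hd := mem_tail hd hyd
  rcases List.mem_append.1 hd with hd | hd
  · obtain ⟨s, m, rfl⟩ := List.append_of_mem hd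
    rw [List.append_assoc, List.cons_append] at h
    exact h.not_adj_of_append hclaw hgap hyd hyc
  · obtain ⟨m, r, rfl⟩ := List.append_of_mem ((List.mem_cons.1 hd).resolve_left (Ne.symm hcd))
    exact h.not_adj_of_append hclaw hgap hyc hyd

end IsBlockedPath
end BlockedPath

/-! ### Pendant vertices and the exchange property -/

section Traceable

variable {V : Type*} {G : SimpleGraph V} {L W W' : Finset V} {l : List V}
  {v x y z c p q u p' q' x₁ x₂ x₃ u₁ u₂ u₃ : V}

/-- `W` is the vertex set of a path of `G`. -/
def IsTraceable (G : SimpleGraph V) (W : Finset V) : Prop :=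
  ∃ l : List V, l.IsChain G.Adj ∧ (l : Multiset V) = W.val

/-- `x` is a vertex of degree one in the subgraph of `G` induced on `W`, with neighbour `u`. -/
structure IsPendant (G : SimpleGraph V) (W : Finset V) (x u : V) : Prop where
  mem : x ∈ W
  neighbor_mem : u ∈ W
  adj_iff : ∀ w ∈ W, G.Adj x w ↔ w = u

lemma mem_iff_of_coe_eq_val (hW : (l : Multiset V) = W.val) : x ∈ l ↔ x ∈ W := by
  rw [← mem_val, ← hW, Multiset.mem_coe]

lemma nodup_of_coe_eq_val (hW : (l : Multiset V) = W.val) : l.Nodup := by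
  rw [← Multiset.coe_nodup, hW]
  exact W.nodup

lemma IsTraceable.exists_adj (h : IsTraceable G W) (hcard : 1 < #W) (hx : x ∈ W) :
    ∃ u ∈ W, G.Adj x u := by
  obtain ⟨l, hchain, hW⟩ := h
  simp only [← mem_iff_of_coe_eq_val hW] at hx ⊢
  obtain ⟨s, r, rfl⟩ := List.append_of_mem hx
  rcases r with _ | ⟨b, r⟩
  · rcases List.eq_nil_or_concat s with rfl | ⟨s, a, rfl⟩
    · simp [card_def, ← hW] at hcard
    · rw [List.concat_eq_append, List.append_assoc, List.singleton_append,
        List.isChain_append_cons_cons] at hchain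
      exact ⟨a, by simp, hchain.2.1.symm⟩
  · exact ⟨b, by simp, (List.isChain_append_cons_cons.1 hchain).2.1⟩

namespace IsPendant

lemma adj (h : IsPendant G W x u) : G.Adj x u :=
  (h.adj_iff u h.neighbor_mem).2 rfl

lemma eq_of_adj (h : IsPendant G W x u) {w : V} (hw : w ∈ W) (hxw : G.Adj x w) : w = u :=
  (h.adj_iff w hw).1 hxw

lemma of_subset (h : IsPendant G W x u) (hsub : W' ⊆ W) (hx : x ∈ W')
    (hadj : ∃ w ∈ W', G.Adj x w) : IsPendant G W' x u where
  mem := hx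
  neighbor_mem := by
    obtain ⟨w, hw, hxw⟩ := hadj
    rwa [← h.eq_of_adj (hsub hw) hxw]
  adj_iff w hw := h.adj_iff w (hsub hw)

lemma insert_of_not_adj [DecidableEq V] (h : IsPendant G W x u) (hv : v ∉ W) (hxv : ¬ G.Adj x v) :
    IsPendant G (insert v W) x u where
  mem := mem_insert_of_mem h.mem
  neighbor_mem := mem_insert_of_mem h.neighbor_mem
  adj_iff w hw := by
    rcases mem_insert.1 hw with rfl | hw
    · exact iff_of_false hxv fun hwu => hv (hwu ▸ h.neighbor_mem)
    · exact h.adj_iff w hw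

lemma head?_or_getLast? (h : IsPendant G W x u) (hchain : l.IsChain G.Adj)
    (hW : (l : Multiset V) = W.val) : l.head? = some x ∨ l.getLast? = some x := by
  have hmem {w : V} : w ∈ l ↔ w ∈ W := mem_iff_of_coe_eq_val hW
  have hnodup := nodup_of_coe_eq_val hW
  obtain ⟨s, r, rfl⟩ := List.append_of_mem (hmem.2 h.mem)
  rcases List.eq_nil_or_concat s with rfl | ⟨s, a, rfl⟩
  · exact .inl rfl
  rcases r with _ | ⟨b, r⟩
  · exact .inr (by simp)
  rw [List.concat_eq_append, List.append_assoc, List.singleton_append,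
    List.isChain_append_cons_cons, List.isChain_cons_cons] at hchain
  have ha : a = u := h.eq_of_adj (hmem.1 (by simp)) hchain.2.1.symm
  have hb : b = u := h.eq_of_adj (hmem.1 (by simp)) hchain.2.2.1
  simp [ha, hb, List.nodup_append] at hnodup

lemma not_isTraceable (h₁ : IsPendant G W x₁ u₁) (h₂ : IsPendant G W x₂ u₂)
    (h₃ : IsPendant G W x₃ u₃) (h₁₂ : x₁ ≠ x₂) (h₁₃ : x₁ ≠ x₃) (h₂₃ : x₂ ≠ x₃) :
    ¬ IsTraceable G W := by
  rintro ⟨l, hchain, hW⟩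
  have h₁ := h₁.head?_or_getLast? hchain hW
  have h₂ := h₂.head?_or_getLast? hchain hW
  have h₃ := h₃.head?_or_getLast? hchain hW
  grind

lemma not_adj_of_not_isTraceable [DecidableEq V] (h : IsPendant G W x u) (hW : IsTraceable G W)
    (hv : v ∉ W) (hvW : ¬ IsTraceable G (insert v W)) : ¬ G.Adj v x := by
  intro hvx
  obtain ⟨l, hchain, hl⟩ := hW
  have hins : v ::ₘ W.val = (insert v W).val := (insert_val_of_notMem hv).symm
  rcases h.head?_or_getLast? hchain hl with hx | hx
  · refine hvW ⟨v :: l, List.isChain_cons.2 ⟨by simpa [hx] using hvx, hchain⟩, ?_⟩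
    rw [← hins, ← hl, Multiset.cons_coe]
  · refine hvW ⟨l ++ [v], List.isChain_append.2 ⟨hchain, .singleton v, ?_⟩, ?_⟩
    · simpa [hx] using hvx.symm
    · rw [← hins, ← hl, Multiset.cons_coe, Multiset.coe_eq_coe]
      exact List.perm_append_singleton v l

section GapFree

variable (hgap : G.GapFree) (h₁ : IsPendant G W x₁ u₁) (h₂ : IsPendant G W x₂ u₂)
  (h₃ : IsPendant G W x₃ u₃) (h₁₂ : x₁ ≠ x₂) (h₁₃ : x₁ ≠ x₃) (h₂₃ : x₂ ≠ x₃)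
include hgap h₁ h₂ h₃ h₁₃ h₂₃

lemma not_adj : ¬ G.Adj x₁ x₂ := by
  intro hadj
  obtain rfl : x₂ = u₁ := h₁.eq_of_adj h₂.mem hadj
  obtain rfl : x₁ = u₂ := h₂.eq_of_adj h₁.mem hadj.symm
  have h₁₃' : ¬ G.Adj x₁ x₃ := fun h => h₂₃ (h₁.eq_of_adj h₃.mem h).symm
  have h₂₃' : ¬ G.Adj x₂ x₃ := fun h => h₁₃ (h₂.eq_of_adj h₃.mem h).symm
  have h₁u : x₁ ≠ u₃ := by rintro rfl; exact h₁₃' h₃.adj.symm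
  have h₂u : x₂ ≠ u₃ := by rintro rfl; exact h₂₃' h₃.adj.symm
  rcases hgap x₁ x₂ x₃ u₃ hadj h₃.adj h₁₃ h₁u h₂₃ h₂u with h | h | h | h
  · exact h₁₃' h
  · exact h₂u (h₁.eq_of_adj h₃.neighbor_mem h).symm
  · exact h₂₃' h
  · exact h₁u (h₂.eq_of_adj h₃.neighbor_mem h).symm

include h₁₂

lemma neighbor_ne (hclaw : G.ClawFree) : u₁ ≠ u₂ := by
  rintro rfl
  have h₁₂' := not_adj hgap h₁ h₂ h₃ h₁₃ h₂₃
  have h₁₃' := not_adj hgap h₁ h₃ h₂ h₁₂ h₂₃.symm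
  have h₂₃' := not_adj hgap h₂ h₃ h₁ h₁₂.symm h₁₃.symm
  have hu₃ : u₁ ≠ u₃ := by
    rintro rfl
    have := hclaw u₁ x₁ x₂ x₃ h₁.adj.symm h₂.adj.symm h₃.adj.symm h₁₂ h₁₃ h₂₃
    tauto
  have h₁u : ¬ G.Adj x₁ u₃ := fun h => hu₃ (h₁.eq_of_adj h₃.neighbor_mem h).symm
  have h₂u : ¬ G.Adj x₂ u₃ := fun h => hu₃ (h₂.eq_of_adj h₃.neighbor_mem h).symm
  have hu₁ : ¬ G.Adj u₁ x₃ := fun h => hu₃ (h₃.eq_of_adj h₁.neighbor_mem h.symm)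
  have hx₁ : x₁ ≠ u₃ := by rintro rfl; exact h₁₃' h₃.adj.symm
  have hx₂ : x₂ ≠ u₃ := by rintro rfl; exact h₂₃' h₃.adj.symm
  have hx₃ : u₁ ≠ x₃ := by rintro rfl; exact h₁₃' h₁.adj
  have huu : G.Adj u₁ u₃ := by
    have := hgap x₁ u₁ x₃ u₃ h₁.adj h₃.adj h₁₃ hx₁ hx₃ hu₃
    tauto
  have := hclaw u₁ x₁ x₂ u₃ h₁.adj.symm h₂.adj.symm huu h₁₂ hx₁ hx₂
  tauto

lemma adj_neighbor_of_adj (hclaw : G.ClawFree) (hv : v ∉ W) (hv₁ : G.Adj v x₁)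
    (hv₂ : ¬ G.Adj v x₂) : G.Adj v u₂ := by
  have h₁₂' := not_adj hgap h₁ h₂ h₃ h₁₃ h₂₃
  have hx₁ : x₁ ≠ u₂ := by rintro rfl; exact h₁₂' h₂.adj.symm
  have h₁u : ¬ G.Adj x₁ u₂ := fun h =>
    neighbor_ne hgap h₁ h₂ h₃ h₁₂ h₁₃ h₂₃ hclaw (h₁.eq_of_adj h₂.neighbor_mem h).symm
  have := hgap v x₁ x₂ u₂ hv₁ h₂.adj (fun h => hv (h ▸ h₂.mem))
    (fun h => hv (h ▸ h₂.neighbor_mem)) h₁₂ hx₁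
  tauto

end GapFree
end IsPendant

section BlockedPath

variable (hclaw : G.ClawFree) (hgap : G.GapFree)
include hclaw hgap

lemma IsBlockedPath.exists_isPendant_head (h : IsBlockedPath G y (p :: l)) (hl : l ≠ [])
    (hc : c ∈ p :: l) (hyc : G.Adj y c) (hW : ∀ w, w ∈ W ↔ w ∈ y :: p :: l) :
    ∃ p', IsPendant G W p p' := by
  obtain ⟨q, l, rfl⟩ := List.exists_cons_of_ne_nil hl
  refine ⟨q, (hW p).2 (by simp), (hW q).2 (by simp), fun w hw => ?_⟩
  rcases List.mem_cons.1 ((hW w).1 hw) with rfl | hw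
  · exact iff_of_false (fun hpw => h.not_adj_head hpw.symm) (h.ne_of_mem (by simp))
  · exact h.adj_head_iff hclaw hgap hc hyc hw

lemma IsBlockedPath.isPendant (h : IsBlockedPath G y (p :: l)) (hl : l ≠ [])
    (hc : c ∈ p :: l) (hyc : G.Adj y c) (hW : ∀ w, w ∈ W ↔ w ∈ y :: p :: l) :
    IsPendant G W y c where
  mem := (hW y).2 (by simp)
  neighbor_mem := (hW c).2 (List.mem_cons_of_mem y hc)
  adj_iff w hw := by
    obtain ⟨q, l, rfl⟩ := List.exists_cons_of_ne_nil hl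
    refine ⟨fun hyw => ?_, fun hwc => hwc ▸ hyc⟩
    have hw := (List.mem_cons.1 ((hW w).1 hw)).resolve_left hyw.ne'
    exact h.eq_of_adj hclaw hgap hw hc hyw hyc

variable [DecidableEq V]

lemma IsTraceable.exists_isPendant (hL : IsTraceable G L) (hcard : 1 < #L) (hy : y ∉ L)
    (hyL : ¬ IsTraceable G (insert y L)) (hc : c ∈ L) (hyc : G.Adj y c) :
    IsPendant G (insert y L) y c ∧ ∃ p ∈ L, ∃ q ∈ L, p ≠ q ∧
      ∃ p' q', IsPendant G (insert y L) p p' ∧ IsPendant G (insert y L) q q' := by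
  obtain ⟨l, hchain, hl⟩ := hL
  have hmem (w : V) : w ∈ insert y L ↔ w ∈ y :: l := by
    rw [mem_insert, List.mem_cons, mem_iff_of_coe_eq_val hl]
  have hblocked : IsBlockedPath G y l := by
    refine ⟨hchain, List.nodup_cons.2 ⟨by rwa [mem_iff_of_coe_eq_val hl], nodup_of_coe_eq_val hl⟩,
      fun m hm hm' => ?_⟩
    refine hyL ⟨m, hm', ?_⟩
    rw [insert_val_of_notMem hy, ← hl, Multiset.cons_coe, Multiset.coe_eq_coe.2 hm]
  have hlen : 1 < l.length := by rwa [card_def, ← hl, Multiset.coe_card] at hcard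
  rw [← mem_iff_of_coe_eq_val hl] at hc
  simp only [← mem_iff_of_coe_eq_val hl]
  obtain ⟨p, m, q, rfl⟩ : ∃ p m q, l = p :: (m ++ [q]) := by
    obtain ⟨p, l, rfl⟩ := List.exists_cons_of_length_pos (by omega : 0 < l.length)
    obtain rfl | ⟨m, q, rfl⟩ := List.eq_nil_or_concat l
    · simp at hlen
    · exact ⟨p, m, q, by rw [List.concat_eq_append]⟩
  have hrev : (p :: (m ++ [q])).reverse = q :: (m.reverse ++ [p]) := by simp
  obtain ⟨p', hp⟩ := hblocked.exists_isPendant_head hclaw hgap (by simp) hc hyc hmem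
  obtain ⟨q', hq⟩ : ∃ q', IsPendant G (insert y L) q q' := by
    refine (hrev ▸ hblocked.reverse).exists_isPendant_head hclaw hgap (by simp)
      (hrev ▸ List.mem_reverse.2 hc) hyc fun w => ?_
    rw [hmem, ← hrev, List.mem_cons (b := y), List.mem_cons (b := y), List.mem_reverse]
  have hpq : p ≠ q := by
    have := hblocked.nodup
    simp at this
    tauto
  exact ⟨hblocked.isPendant hclaw hgap (by simp) hc hyc hmem,
    p, by simp, q, by simp, hpq, p', q', hp, hq⟩

omit hclaw hgap in
lemma IsPendant.not_isTraceable_insert (hp : IsPendant G (insert y L) p p')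
    (hq : IsPendant G (insert y L) q q') (hpL : p ∈ L) (hqL : q ∈ L) (hpq : p ≠ q)
    (hL : IsTraceable G L) (hcard : 1 < #L) (hv : v ∉ L)
    (hvL : ∀ w ∈ L, G.Adj v w → IsPendant G (insert v L) v w) (hvp : ¬ G.Adj v p)
    (hvq : ¬ G.Adj v q) : ¬ IsTraceable G (insert v L) := by
  intro htrace
  obtain ⟨w, hw, hvw⟩ := htrace.exists_adj
    (hcard.trans_le (card_le_card (subset_insert v L))) (mem_insert_self v L)
  have hwL : w ∈ L := (mem_insert.1 hw).resolve_left hvw.ne'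
  have insert_v {w u : V} (hw : IsPendant G (insert y L) w u) (hwL : w ∈ L)
      (hvw : ¬ G.Adj v w) : IsPendant G (insert v L) w u :=
    (hw.of_subset (subset_insert y L) hwL (hL.exists_adj hcard hwL)).insert_of_not_adj hv
      fun h => hvw h.symm
  exact (hvL w hwL hvw).not_isTraceable (insert_v hp hpL hvp) (insert_v hq hqL hvq)
    (fun h => hv (h ▸ hpL)) (fun h => hv (h ▸ hqL)) hpq htrace

/- If `v` is adjacent to `p`, then gap-freeness makes it adjacent to both `c` and `q'`, whereas it
is pendant in `insert v R`, where `R = (insert y L).erase p`, if the latter is not traceable.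
If `v` is not adjacent to `p`, then `v`, `p`, `q` would be pendant in `insert v L`. -/
lemma IsPendant.isTraceable_insert_erase_insert (hy : IsPendant G (insert y L) y c)
    (hp : IsPendant G (insert y L) p p') (hq : IsPendant G (insert y L) q q')
    (hyL : y ∉ L) (hpL : p ∈ L) (hqL : q ∈ L) (hpq : p ≠ q) (hv : v ∉ insert y L)
    (hcard : 1 < #L) (hL : IsTraceable G L) (hvL : IsTraceable G (insert v L))
    (hR : IsTraceable G ((insert y L).erase p)) :
    IsTraceable G (insert v ((insert y L).erase p)) := by
  have hyp : y ≠ p := fun h => hyL (h ▸ hpL)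
  have hyq : y ≠ q := fun h => hyL (h ▸ hqL)
  set R := (insert y L).erase p with hRdef
  by_contra hvR
  have mem_R {w : V} (hwp : w ≠ p) (hw : w ∈ insert y L) : w ∈ R := mem_erase.2 ⟨hwp, hw⟩
  have hvR' : v ∉ R := fun h => hv (mem_of_mem_erase h)
  have hRcard : 1 < #R := by
    rwa [card_erase_of_mem hp.mem, card_insert_of_notMem hyL, Nat.add_sub_cancel]
  have not_adj_v {x u : V} (hx : IsPendant G (insert y L) x u) (hxp : x ≠ p) : ¬ G.Adj v x :=
    have hxR := mem_R hxp hx.mem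
    (hx.of_subset (erase_subset p _) hxR (hR.exists_adj hRcard hxR)).not_adj_of_not_isTraceable
      hR hvR' hvR
  have isPendant_v {w : V} (hw : w ∈ R) (hvw : G.Adj v w) : IsPendant G (insert v R) v w :=
    (hR.exists_isPendant hclaw hgap hRcard hvR' hvR hw hvw).1
  by_cases hvp : G.Adj v p
  · have hcp : c ≠ p := by rintro rfl; exact not_adj hgap hy hp hq hyq hpq hy.adj
    have hq'p : q' ≠ p := by rintro rfl; exact not_adj hgap hq hp hy hyq.symm hyp.symm hq.adj
    have hvc : G.Adj v c :=
      adj_neighbor_of_adj hgap hp hy hq hyp.symm hpq hyq hclaw hv hvp (not_adj_v hy hyp)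
    have hvq' : G.Adj v q' :=
      adj_neighbor_of_adj hgap hp hq hy hpq hyp.symm hyq.symm hclaw hv hvp (not_adj_v hq hpq.symm)
    have hq'c : q' = c := (isPendant_v (mem_R hcp hy.neighbor_mem) hvc).eq_of_adj
      (mem_insert_of_mem (mem_R hq'p hq.neighbor_mem)) hvq'
    exact neighbor_ne hgap hy hq hp hyq hyp hpq.symm hclaw hq'c.symm
  · have hvL' : v ∉ L := fun h => hv (mem_insert_of_mem h)
    have hpR : p ∉ insert v R := by
      simp [hRdef, show p ≠ v from fun h => hvL' (h ▸ hpL)]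
    have hsub : insert v L ⊆ insert p (insert v R) := fun x hx => by
      simp only [hRdef, mem_insert, mem_erase] at hx ⊢
      tauto
    refine hp.not_isTraceable_insert hq hpL hqL hpq hL hcard hvL' (fun w hw hvw => ?_) hvp
      (not_adj_v hq hpq.symm) hvL
    have hwR : w ∈ R := mem_R (by rintro rfl; exact hvp hvw) (mem_insert_of_mem hw)
    exact ((isPendant_v hwR hvw).insert_of_not_adj hpR hvp).of_subset hsub (mem_insert_self v L)
      ⟨w, mem_insert_of_mem hw, hvw⟩

/- If `insert y L` is not traceable, then it has at least three pendant vertices: `y` and the ends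
of a path through `L`. Since `(insert y L).erase z` is traceable, `z` must be one of these ends. -/
lemma IsTraceable.exchange (hL : IsTraceable G L) (hcard : 1 < #L) (hy : y ∉ L)
    (hv : v ∉ insert y L) (hz : z ∈ L) (hvL : IsTraceable G (insert v L))
    (hR : IsTraceable G ((insert y L).erase z)) :
    IsTraceable G (insert y L) ∨ IsTraceable G (insert v ((insert y L).erase z)) := by
  by_contra! hnot
  have hyz : y ≠ z := fun h => hy (h ▸ hz)
  have hRcard : 1 < #((insert y L).erase z) := by
    rwa [card_erase_of_mem (mem_insert_of_mem hz), card_insert_of_notMem hy, Nat.add_sub_cancel]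
  have mem_R {w : V} (hwz : w ≠ z) (hw : w ∈ insert y L) : w ∈ (insert y L).erase z :=
    mem_erase.2 ⟨hwz, hw⟩
  obtain ⟨c, hc, hyc⟩ := hR.exists_adj hRcard (mem_R hyz (mem_insert_self y L))
  have hcL : c ∈ L := (mem_insert.1 (mem_of_mem_erase hc)).resolve_left hyc.ne'
  obtain ⟨hy', p, hpL, q, hqL, hpq, p', q', hp, hq⟩ :=
    hL.exists_isPendant hclaw hgap hcard hy hnot.1 hcL hyc
  by_cases hpz : p = z
  · subst hpz
    exact hnot.2 (hy'.isTraceable_insert_erase_insert hclaw hgap hp hq hy hpL hqL hpq hv hcard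
      hL hvL hR)
  by_cases hqz : q = z
  · subst hqz
    exact hnot.2 (hy'.isTraceable_insert_erase_insert hclaw hgap hq hp hy hqL hpL hpq.symm hv
      hcard hL hvL hR)
  have pendant_R {x u : V} (hx : IsPendant G (insert y L) x u) (hxz : x ≠ z) :
      IsPendant G ((insert y L).erase z) x u :=
    hx.of_subset (erase_subset z _) (mem_R hxz hx.mem) (hR.exists_adj hRcard (mem_R hxz hx.mem))
  exact (pendant_R hy' hyz).not_isTraceable (pendant_R hp hpz) (pendant_R hq hqz)
    (fun h => hy (h ▸ hpL)) (fun h => hy (h ▸ hqL)) hpq hR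

end BlockedPath
end Traceable

/-! ### Linear quotients of path ideals -/

section Extension

variable {V α : Type u} [LinearOrder V] [LinearOrder α] {𝓕 𝓖 : Set (Finset V)} {r : Finset V → α}
  {L L' W : Finset V} {v w : V}

open Classical in
/-- The position of `W` in the order in which the sets containing a member of `𝓕` and one further
vertex arise, when `𝓕` is enumerated in the order of `r` and each member is extended by the
vertices in increasing order. -/
noncomputable def extensionRank (𝓕 : Set (Finset V)) (r : Finset V → α) (W : Finset V) :
    WithTop (α ×ₗ V) :=
  {v ∈ W | W.erase v ∈ 𝓕}.inf fun v => (toLex (r (W.erase v), v) : α ×ₗ V)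

lemma extensionRank_insert_le (hL : L ∈ 𝓕) (hv : v ∉ L) :
    extensionRank 𝓕 r (insert v L) ≤ (toLex (r L, v) : α ×ₗ V) := by
  classical
  have hle := inf_le (s := {w ∈ insert v L | (insert v L).erase w ∈ 𝓕}) (b := v)
    (f := fun w => ((toLex (r ((insert v L).erase w), w) : α ×ₗ V) : WithTop (α ×ₗ V)))
    (mem_filter.2 ⟨mem_insert_self v L, by rwa [erase_insert hv]⟩)
  rw [erase_insert hv] at hle
  exact hle

lemma exists_extensionRank_eq (hW : ∃ v ∈ W, W.erase v ∈ 𝓕) :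
    ∃ L ∈ 𝓕, ∃ v ∉ L, W = insert v L ∧ extensionRank 𝓕 r W = (toLex (r L, v) : α ×ₗ V) := by
  classical
  obtain ⟨v, hv, hvW⟩ := hW
  obtain ⟨w, hw, heq⟩ := exists_mem_eq_inf {v ∈ W | W.erase v ∈ 𝓕} ⟨v, mem_filter.2 ⟨hv, hvW⟩⟩
    fun v => ((toLex (r (W.erase v), v) : α ×ₗ V) : WithTop (α ×ₗ V))
  rw [mem_filter] at hw
  exact ⟨W.erase w, hw.2, w, notMem_erase w W, (insert_erase hw.1).symm, heq⟩

lemma le_of_extensionRank_eq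
    (hrank : extensionRank 𝓕 r (insert v L) = (toLex (r L, v) : α ×ₗ V)) (hL' : L' ∈ 𝓕)
    (hw : w ∉ L') (heq : insert w L' = insert v L) : r L ≤ r L' := by
  have hle := extensionRank_insert_le (r := r) hL' hw
  rw [heq, hrank, WithTop.coe_le_coe, Prod.Lex.toLex_le_toLex] at hle
  exact hle.elim le_of_lt fun h => h.1.le

lemma HasSetLinearQuotients.of_extension (hr : Set.InjOn r 𝓕)
    (h𝓖 : ∀ W ∈ 𝓖, ∃ v ∈ W, W.erase v ∈ 𝓕)
    (hstep : ∀ L ∈ 𝓕, ∀ v ∉ L, insert v L ∈ 𝓖 →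
      extensionRank 𝓕 r (insert v L) = (toLex (r L, v) : α ×ₗ V) → ∀ M ∈ 𝓕, r M < r L →
        ∃ L' ∈ 𝓕, ∃ w ∉ L', toLex (r L', w) < toLex (r L, v) ∧ insert w L' ∈ 𝓖 ∧
          ∃ y ∈ M, insert w L' ⊆ insert y (insert v L)) :
    HasSetLinearQuotients 𝓖 := by
  refine ⟨_, inferInstance, extensionRank 𝓕 r, ?_, ?_⟩
  · intro W hW U hU heq
    obtain ⟨L, hL, v, -, rfl, hrank⟩ := exists_extensionRank_eq (r := r) (h𝓖 W hW)
    obtain ⟨M, hM, w, -, rfl, hrank'⟩ := exists_extensionRank_eq (r := r) (h𝓖 U hU)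
    have hkey : toLex (r L, v) = toLex (r M, w) :=
      WithTop.coe_injective (hrank.symm.trans (heq.trans hrank'))
    obtain ⟨hLM, rfl⟩ := Prod.mk.inj (toLex.injective hkey)
    rw [hr hL hM hLM]
  · intro W hW U hU hlt
    obtain ⟨L, hL, v, hv, rfl, hrank⟩ := exists_extensionRank_eq (r := r) (h𝓖 W hW)
    obtain ⟨M, hM, w, -, rfl, hrank'⟩ := exists_extensionRank_eq (r := r) (h𝓖 U hU)
    have hkey := hlt
    rw [hrank, hrank', WithTop.coe_lt_coe, Prod.Lex.toLex_lt_toLex] at hkey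
    rcases hkey with hML | ⟨hML, -⟩
    · obtain ⟨L', hL', x, hx, hlt', hmem, y, hy, hsub⟩ := hstep L hL v hv hW hrank M hM hML
      refine ⟨_, hmem, ?_, y, mem_insert_of_mem hy, by rw [← coe_insert, coe_subset]; exact hsub⟩
      rw [hrank]
      exact (extensionRank_insert_le hL' hx).trans_lt (WithTop.coe_lt_coe.2 hlt')
    · obtain rfl := hr hM hL hML
      refine ⟨_, hU, hlt, w, mem_insert_self w M, ?_⟩
      rw [← coe_insert, coe_subset]
      exact insert_subset_insert w (subset_insert v M)

end Extension

section PathSets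

variable {V : Type u} {G : SimpleGraph V} {W : Finset V} {v a b y : V} {t : ℕ}

/-- The vertex sets of the paths of `G` on `t` vertices, which are the supports of the generators
of the `t`-path ideal. -/
def pathSets (G : SimpleGraph V) (t : ℕ) : Set (Finset V) :=
  {W | IsTraceable G W ∧ #W = t}

lemma exists_erase_mem_pathSets [DecidableEq V] (hW : W ∈ pathSets G (t + 1)) :
    ∃ v ∈ W, W.erase v ∈ pathSets G t := by
  obtain ⟨⟨l, hchain, hl⟩, hcard⟩ := hW
  rcases l with _ | ⟨v, l⟩
  · simp [card_def, ← hl] at hcard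
  · have hv : v ∈ W := (mem_iff_of_coe_eq_val hl).1 (by simp)
    refine ⟨v, hv, ⟨l, hchain.of_cons, ?_⟩, ?_⟩
    · rw [erase_val, ← hl, Multiset.coe_erase, List.erase_cons_head]
    · rw [card_erase_of_mem hv, hcard, Nat.add_sub_cancel]

lemma IsTraceable.insert_mem_pathSets [DecidableEq V] (hvW : IsTraceable G (insert v W))
    (hv : v ∉ W) (hW : #W = t) : insert v W ∈ pathSets G (t + 1) :=
  ⟨hvW, by rw [card_insert_of_notMem hv, hW]⟩

lemma pair_mem_pathSets [DecidableEq V] (hab : G.Adj a b) : {a, b} ∈ pathSets G 2 :=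
  ⟨⟨[a, b], by simpa using hab, by rw [insert_val_of_notMem (by simpa using hab.ne)]; rfl⟩,
    card_pair hab.ne⟩

lemma triple_mem_pathSets [DecidableEq V] (hyz : G.Adj y a) (hab : G.Adj a b) (hyb : y ≠ b) :
    insert y {a, b} ∈ pathSets G 3 := by
  have hy : y ∉ ({a, b} : Finset V) := by simp [hyz.ne, hyb]
  refine IsTraceable.insert_mem_pathSets ⟨[y, a, b], by simp [hyz, hab], ?_⟩ hy (card_pair hab.ne)
  rw [insert_val_of_notMem hy, insert_val_of_notMem (by simpa using hab.ne)]
  rfl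

lemma exists_eq_pair_of_mem_pathSets [DecidableEq V] (hW : W ∈ pathSets G 2) (ha : a ∈ W) :
    ∃ b, G.Adj a b ∧ W = {a, b} := by
  obtain ⟨b, hb, hab⟩ := hW.1.exists_adj (by rw [hW.2]; norm_num) ha
  refine ⟨b, hab, (eq_of_subset_of_card_le ?_ (by rw [hW.2, card_pair hab.ne])).symm⟩
  exact insert_subset ha (singleton_subset_iff.2 hb)

lemma exists_lt_of_mem_pathSets_two [LinearOrder V] (hW : W ∈ pathSets G 2) :
    ∃ a b, a < b ∧ G.Adj a b ∧ W = {a, b} := by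
  obtain ⟨c, hc⟩ := card_pos.1 (hW.2 ▸ Nat.two_pos)
  obtain ⟨d, hcd, rfl⟩ := exists_eq_pair_of_mem_pathSets hW hc
  rcases hcd.ne.lt_or_gt with h | h
  · exact ⟨c, d, h, hcd, rfl⟩
  · exact ⟨d, c, h, hcd.symm, pair_comm c d⟩

lemma exists_insert_mem_pathSets_three [DecidableEq V] {e f : Finset V} {s : V}
    (he : e ∈ pathSets G 2) (hf : f ∈ pathSets G 2) (hfe : f ≠ e) (hse : s ∈ e) (hsf : s ∈ f) :
    ∃ w ∉ f, insert w f ∈ pathSets G 3 ∧ ∃ y ∈ f, insert w f ⊆ insert y e := by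
  obtain ⟨w, hsw, rfl⟩ := exists_eq_pair_of_mem_pathSets he hse
  obtain ⟨y, hsy, rfl⟩ := exists_eq_pair_of_mem_pathSets hf hsf
  have hwy : w ≠ y := by rintro rfl; exact hfe rfl
  refine ⟨w, by simp [hsw.ne', hwy], triple_mem_pathSets hsw.symm hsy hwy, y, by simp, ?_⟩
  grind

lemma toColex_lt_toColex_pair [LinearOrder V] (hb : b ∉ W) (hW : ∀ x ∈ W, x ≠ a → x < b) :
    toColex W < toColex ({a, b} : Finset V) :=
  Colex.toColex_lt_toColex_iff_exists_forall_lt.2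
    ⟨b, by simp, hb, fun x hx hxab => hW x hx fun h => hxab (by simp [h])⟩

variable (hgap : G.GapFree) (hclaw : G.ClawFree)
include hgap hclaw

lemma hasSetLinearQuotients_pathSets_succ [LinearOrder V] (ht : 1 < t)
    (h : HasSetLinearQuotients (pathSets G t)) : HasSetLinearQuotients (pathSets G (t + 1)) := by
  obtain ⟨α, _, r, hinj, hr⟩ := h
  refine .of_extension hinj (fun W hW => exists_erase_mem_pathSets hW) ?_
  intro L hL v hv hvL hrank M hM hML
  obtain ⟨L', hL', hlt, y, hy, hsub⟩ := hr L hL M hM hML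
  rw [← coe_insert, coe_subset] at hsub
  have hne : L' ≠ L := by rintro rfl; exact hlt.false
  have hyL : y ∉ L := fun hyL => by
    rw [insert_eq_of_mem hyL] at hsub
    exact hne (eq_of_subset_of_card_le hsub (by rw [hL.2, hL'.2]))
  obtain ⟨z, hz, heq⟩ : ∃ z ∉ L', insert z L' = insert y L :=
    exists_eq_insert_iff.2 ⟨hsub, by rw [card_insert_of_notMem hyL, hL.2, hL'.2]⟩
  have hyv : v ≠ y := by
    rintro rfl
    exact (le_of_extensionRank_eq hrank hL' hz heq).not_gt hlt
  have hzL : z ∈ L := by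
    refine (mem_insert.1 (heq ▸ mem_insert_self z L')).resolve_left ?_
    rintro rfl
    exact hne (by rw [← erase_insert hz, heq, erase_insert hyL])
  have hvy : v ∉ insert y L := by simp [hyv, hv]
  have hvL' : v ∉ L' := fun h => hvy (hsub h)
  have herase : (insert y L).erase z = L' := by rw [← heq, erase_insert hz]
  refine ⟨L', hL', ?_⟩
  rcases hL.1.exchange hclaw hgap (ht.trans_eq hL.2.symm) hyL hvy hzL hvL.1
    (herase.symm ▸ hL'.1) with htrace | htrace
  · refine ⟨z, hz, Prod.Lex.toLex_lt_toLex.2 (.inl hlt), ?_, y, hy, ?_⟩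
    · rw [heq]
      exact htrace.insert_mem_pathSets hyL hL.2
    · rw [heq]
      exact insert_subset_insert y (subset_insert v L)
  · refine ⟨v, hvL', Prod.Lex.toLex_lt_toLex.2 (.inl hlt), ?_, y, hy, ?_⟩
    · rw [herase] at htrace
      exact htrace.insert_mem_pathSets hvL' hL'.2
    · rw [insert_comm]
      exact insert_subset_insert v hsub

lemma exists_mem_adj_of_disjoint [LinearOrder V] {f : Finset V} (hab : G.Adj a b)
    (hf : f ∈ pathSets G 2) (ha : a ∉ f) (hb : b ∉ f) (hva : v ≠ a) (hadj : G.Adj v a ∨ G.Adj v b)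
    (hmin : v < b → ¬ G.Adj v a) (hlt : ∀ y ∈ f, y < b) :
    ∃ y ∈ f, G.Adj a y ∨ G.Adj b y ∧ y < v ∨ v < b ∧ G.Adj v b ∧ G.Adj v y := by
  by_cases hv : v ∈ f
  · obtain ⟨y, hvy, rfl⟩ := exists_eq_pair_of_mem_pathSets hf hv
    have hvb := hlt v hv
    exact ⟨y, by simp, .inr (.inr ⟨hvb, hadj.resolve_left (hmin hvb), hvy⟩)⟩
  obtain ⟨y, hy, hay | hby⟩ : ∃ y ∈ f, G.Adj a y ∨ G.Adj b y := by
    obtain ⟨c, d, -, hcd, rfl⟩ := exists_lt_of_mem_pathSets_two hf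
    simp only [mem_insert, mem_singleton, not_or] at ha hb
    have := hgap a b c d hab hcd ha.1 ha.2 hb.1 hb.2
    simp only [mem_insert, mem_singleton, exists_eq_or_imp, exists_eq_left]
    tauto
  · exact ⟨y, hy, .inl hay⟩
  · have hyv : y ≠ v := by rintro rfl; exact hv hy
    rcases hyv.lt_or_gt with hyv | hvy
    · exact ⟨y, hy, .inr (.inl ⟨hby, hyv⟩)⟩
    by_cases hay : G.Adj a y
    · exact ⟨y, hy, .inl hay⟩
    have hvb : v < b := hvy.trans (hlt y hy)
    have hva' := hmin hvb
    have hvb' := hadj.resolve_left hva'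
    have hay' : a ≠ y := by rintro rfl; exact ha hy
    have := hclaw b a y v hab.symm hby hvb'.symm hay' hva.symm hyv
    rw [G.adj_comm a v, G.adj_comm y v] at this
    exact ⟨y, hy, .inr (.inr ⟨hvb, hvb', by tauto⟩)⟩

lemma exists_extension_of_lt [LinearOrder V] {e f : Finset V} (he : e ∈ pathSets G 2)
    (hf : f ∈ pathSets G 2) (hfe : toColex f < toColex e) (hv : v ∉ e)
    (hve : insert v e ∈ pathSets G 3)
    (hmin : ∀ e' ∈ pathSets G 2, e' ⊆ insert v e → toColex e ≤ toColex e') :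
    ∃ e' ∈ pathSets G 2, ∃ w ∉ e', toLex (toColex e', w) < toLex (toColex e, v) ∧
      insert w e' ∈ pathSets G 3 ∧ ∃ y ∈ f, insert w e' ⊆ insert y (insert v e) := by
  by_cases hdisj : ∃ s ∈ e, s ∈ f
  · obtain ⟨s, hse, hsf⟩ := hdisj
    obtain ⟨w, hw, hwf, y, hy, hsub⟩ :=
      exists_insert_mem_pathSets_three he hf (by rintro rfl; exact hfe.false) hse hsf
    exact ⟨f, hf, w, hw, Prod.Lex.toLex_lt_toLex.2 (.inl hfe), hwf, y, hy,
      hsub.trans (insert_subset_insert y (subset_insert v e))⟩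
  obtain ⟨a, b, hab', hab, rfl⟩ := exists_lt_of_mem_pathSets_two he
  simp only [mem_insert, mem_singleton, exists_eq_or_imp, exists_eq_left, not_or] at hdisj hv
  have hadj : G.Adj v a ∨ G.Adj v b := by
    obtain ⟨w, hw, hvw⟩ := hve.1.exists_adj (by rw [hve.2]; norm_num) (mem_insert_self v _)
    grind [G.loopless.irrefl v]
  have hlt : ∀ y ∈ f, y < b := by
    obtain ⟨m, hm, -, hlt⟩ := Colex.toColex_lt_toColex_iff_exists_forall_lt.1 hfe
    grind
  have hmin : v < b → ¬ G.Adj v a := fun hvb hva =>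
    (hmin {a, v} (pair_mem_pathSets hva.symm) (by grind)).not_gt
      (toColex_lt_toColex_pair (by grind) (by grind))
  obtain ⟨y, hy, hay | ⟨hby, hyv⟩ | ⟨hvb, hvb', hvy⟩⟩ :=
    exists_mem_adj_of_disjoint hgap hclaw hab hf hdisj.1 hdisj.2 hv.1 hadj hmin hlt
  · have hyb := hlt y hy
    refine ⟨{a, y}, pair_mem_pathSets hay, b, by simp [hab.ne', hyb.ne'],
      Prod.Lex.toLex_lt_toLex.2 (.inl (toColex_lt_toColex_pair (by simp [hab.ne', hyb.ne']) ?_)),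
      triple_mem_pathSets hab.symm hay hyb.ne', y, hy, ?_⟩
    · simp [hyb]
    · grind
  · refine ⟨{a, b}, he, y, ?_, Prod.Lex.toLex_lt_toLex.2 (.inr ⟨rfl, hyv⟩), ?_, y, hy, ?_⟩
    · simp only [mem_insert, mem_singleton, not_or]
      exact ⟨by rintro rfl; exact hdisj.1 hy, hby.ne'⟩
    · rw [pair_comm]
      exact triple_mem_pathSets hby.symm hab.symm (by rintro rfl; exact hdisj.1 hy)
    · exact insert_subset_insert y (subset_insert v _)
  · have hyb := hlt y hy
    refine ⟨{v, y}, pair_mem_pathSets hvy, b, by simp [hvb.ne', hyb.ne'],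
      Prod.Lex.toLex_lt_toLex.2 (.inl (toColex_lt_toColex_pair (by simp [hvb.ne', hyb.ne']) ?_)),
      triple_mem_pathSets hvb'.symm hvy hyb.ne', y, hy, ?_⟩
    · simp [hvb, hyb]
    · grind

lemma hasSetLinearQuotients_pathSets_three [LinearOrder V] :
    HasSetLinearQuotients (pathSets G 3) := by
  refine .of_extension (𝓕 := pathSets G 2) (r := toColex) toColex.injective.injOn
    (fun W hW => exists_erase_mem_pathSets hW) ?_
  intro e he v hv hve hrank f hf hfe
  refine exists_extension_of_lt hgap hclaw he hf hfe hv hve fun e' he' hsub => ?_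
  obtain ⟨w, hw, heq⟩ : ∃ w ∉ e', insert w e' = insert v e :=
    exists_eq_insert_iff.2 ⟨hsub, by rw [he'.2, hve.2]⟩
  exact le_of_extensionRank_eq hrank he' hw heq

theorem hasSetLinearQuotients_pathSets (ht : 2 < t) : HasSetLinearQuotients (pathSets G t) := by
  classical
  let : LinearOrder V := linearOrderOfSTO WellOrderingRel
  induction t, ht using Nat.le_induction with
  | base => exact hasSetLinearQuotients_pathSets_three hgap hclaw
  | succ t ht ih => exact hasSetLinearQuotients_pathSets_succ hgap hclaw (by omega) ih

end PathSets

lemma pathIdeal_eq_span_monomial {V K : Type*} [CommRing K] (G : SimpleGraph V) (t : ℕ) :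
    pathIdeal (K := K) G t =
      Ideal.span ((fun m => monomial m (1 : K)) '' (squarefreeExponent '' pathSets G t)) := by
  classical
  rw [pathIdeal, Set.image_image]
  congr 1
  ext f
  constructor
  · rintro ⟨l, ⟨hchain, hnodup⟩, hlen, rfl⟩
    refine ⟨l.toFinset, ⟨⟨l, hchain, ?_⟩, ?_⟩, (prod_map_X_eq_monomial hnodup).symm⟩
    · rw [List.toFinset_val, hnodup.dedup]
    · rw [List.toFinset_card_of_nodup hnodup, hlen]
  · rintro ⟨W, ⟨⟨l, hchain, hl⟩, hcard⟩, rfl⟩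
    have hnodup := nodup_of_coe_eq_val hl
    have hW : l.toFinset = W := by
      ext x
      rw [List.mem_toFinset, mem_iff_of_coe_eq_val hl]
    refine ⟨l, ⟨hchain, hnodup⟩, ?_, by rw [prod_map_X_eq_monomial hnodup, hW]⟩
    rw [← hcard, ← hW, List.toFinset_card_of_nodup hnodup]

/-- For an integer `t > 2`, if `G` is gap-free and claw-free with
`I_t(G) ≠ 0`, then `I_t(G)` has a linear minimal free resolution, i.e.
`reg (I_t(G)) = t`. -/
theorem stmt13 {V K : Type*} [Fintype V] [Field K] (G : SimpleGraph V)
    (t : ℕ) (ht : 2 < t) (hgap : G.GapFree) (hclaw : G.ClawFree)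
    (hnz : pathIdeal (K := K) G t ≠ ⊥) :
    reg (pathIdeal (K := K) G t) = t := by
  have hlq := (hasSetLinearQuotients_pathSets hgap hclaw ht).hasLinearQuotients
  rw [pathIdeal_eq_span_monomial] at hnz ⊢
  have hfin : (squarefreeExponent '' pathSets G t).Finite := (Set.toFinite _).image _
  have hne : (squarefreeExponent '' pathSets G t).Nonempty := by
    rw [Set.nonempty_iff_ne_empty]
    intro hempty
    simp [hempty] at hnz
  refine hlq.reg_span_monomial hfin hne (by omega) ?_
  rintro _ ⟨W, hW, rfl⟩
  rw [monomialDegree_squarefreeExponent, hW.2]
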